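/- arXiv:2403.11470 — 2 statements merged into one kernel-verified Lean document; each statement's English description precedes it below -/
import Mathlib

section
/- Let t be a positive integer and let H⃗ be an in-arborescence on t vertices with root r. Let G⃗ be a digraph and let S ⊆ V(G⃗) be well-in-connected in G⃗ such that G⃗[S] is isomorphic to a weakly connected subdigraph of H⃗ containing r. If every vertex in V(G⃗)∖S has out-degree at least t in G⃗, then G⃗ contains H⃗⁺ as a butterfly minor such that the branch set of the apex source is a singleton. -/
section DiDefs

variable {V W : Type*}

/-- The out-degree of a vertex in a digraph given by its arc relation. -/
noncomputable def outDeg (G : W → W → Prop) (w : W) : ℕ := {x | G w x}.ncard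

/-- The in-degree of a vertex in a digraph given by its arc relation. -/
noncomputable def inDeg (G : W → W → Prop) (w : W) : ℕ := {x | G x w}.ncard

/-- The digraph `H⁺` obtained from `H` by adding an apex source (`none`) with arcs to all
other vertices. -/
def diApex (H : V → V → Prop) : Option V → Option V → Prop := fun a b =>
  (a = none ∧ ∃ v, b = some v) ∨ (∃ u v, a = some u ∧ b = some v ∧ H u v)

/-- `H` is an in-arborescence with root `r`: a directed tree all of whose arcs are oriented
towards the root. -/
def IsInArborescence [Fintype V] (H : V → V → Prop) (r : V) : Prop :=
  Irreflexive H ∧ (SimpleGraph.fromRel H).IsTree ∧ (∀ v, ¬ H r v) ∧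
    ∀ v, v ≠ r → ∃! u, H v u

/-- `G` contains a subdivision of the digraph `H`: there are branch vertices `f v` and, for
each arc `(u,v)` of `H`, a directed path in `G` from `f u` to `f v` (given by its list `P h`
of internal vertices); the paths are internally disjoint from one another and from the branch
vertices. -/
def DiSubdivisionIn (G : W → W → Prop) (H : V → V → Prop) : Prop :=
  ∃ f : V → W, Function.Injective f ∧
    ∃ P : ∀ ⦃u v : V⦄, H u v → List W,
      (∀ ⦃u v : V⦄ (h : H u v), List.Chain G (f u) (P h ++ [f v])) ∧
      (∀ ⦃u v : V⦄ (h : H u v), (f u :: (P h ++ [f v])).Nodup) ∧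
      (∀ ⦃u v : V⦄ (h : H u v), ∀ x ∈ P h, x ∉ Set.range f) ∧
      (∀ ⦃u v u' v' : V⦄ (h : H u v) (h' : H u' v'), (u, v) ≠ (u', v') →
        ∀ x ∈ P h, x ∉ P h')

/-- A state in the computation of a butterfly minor: a collection `P` of branch sets together
with an arc relation `A` between branch sets. -/
structure DState (W : Type*) where
  P : Set (Set W)
  A : Set W → Set W → Prop

/-- The initial state associated to a digraph `G`: branch sets are singletons and arcs are
those of `G`. -/
def initState (G : W → W → Prop) : DState W :=
  ⟨{B | ∃ w, B = {w}}, fun X Y => ∃ a b, G a b ∧ X = {a} ∧ Y = {b}⟩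

/-- One step of the butterfly-minor operations: deleting a vertex, deleting an arc, or
contracting an arc `(B, C)` where `B` has out-degree one or `C` has in-degree one (the two
branch sets are merged and all resulting loops and parallel arcs are removed). -/
inductive BStep : DState W → DState W → Prop
  | delVertex (σ : DState W) (B : Set W) (hB : B ∈ σ.P) :
      BStep σ ⟨σ.P \ {B}, fun X Y => σ.A X Y ∧ X ≠ B ∧ Y ≠ B⟩
  | delArc (σ : DState W) (B C : Set W) (h : σ.A B C) :
      BStep σ ⟨σ.P, fun X Y => σ.A X Y ∧ ¬(X = B ∧ Y = C)⟩
  | contract (σ : DState W) (B C : Set W) (hB : B ∈ σ.P) (hC : C ∈ σ.P) (hBC : σ.A B C)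
      (hne : B ≠ C)
      (hdeg : (∀ D, σ.A B D → D = C) ∨ (∀ D, σ.A D C → D = B)) :
      BStep σ ⟨insert (B ∪ C) (σ.P \ {B, C}),
        fun X Y =>
          (σ.A X Y ∧ X ≠ B ∧ X ≠ C ∧ Y ≠ B ∧ Y ≠ C) ∨
          (X = B ∪ C ∧ Y ≠ B ∧ Y ≠ C ∧ Y ≠ B ∪ C ∧ (σ.A B Y ∨ σ.A C Y)) ∨
          (Y = B ∪ C ∧ X ≠ B ∧ X ≠ C ∧ X ≠ B ∪ C ∧ (σ.A X B ∨ σ.A X C))⟩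

/-- `H` is a butterfly minor of `G` with branch sets `β`: some sequence of butterfly
operations starting from `G` reaches a state whose digraph is isomorphic to `H` via the
branch-set assignment `β`. -/
def IsButterflyMinorWith (G : W → W → Prop) (H : V → V → Prop) (β : V → Set W) : Prop :=
  ∃ σ : DState W, Relation.ReflTransGen BStep (initState G) σ ∧
    Function.Injective β ∧ σ.P = Set.range β ∧
    ∀ u v : V, H u v ↔ σ.A (β u) (β v)

end DiDefs

/-- A directed separation of `G`: a pair of sets covering the vertex set with no arc from
`B∖A` to `A∖B`. -/
def DiSeparation {W : Type*} (G : W → W → Prop) (A B : Set W) : Prop :=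
  A ∪ B = Set.univ ∧ ∀ b ∈ B \ A, ∀ a ∈ A \ B, ¬ G b a

/-- `S` is well-in-connected in `G`: `S ≠ V(G)` and there is no nontrivial directed
separation `(A,B)` with `S ⊆ A` of order less than `|S|`. -/
def WellInConnected {W : Type*} (G : W → W → Prop) (S : Set W) : Prop :=
  S ≠ Set.univ ∧
    ¬ ∃ A B : Set W, DiSeparation G A B ∧ (A \ B).Nonempty ∧ (B \ A).Nonempty ∧
      S ⊆ A ∧ (A ∩ B).ncard < S.ncard

section Aux

/-- The relation `G` restricted to a set. -/
def Rin {W : Type*} (G : W → W → Prop) (P : Set W) : W → W → Prop :=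
  fun u v => G u v ∧ u ∈ P ∧ v ∈ P

theorem Rin.mono {W : Type*} {G G' : W → W → Prop} {P P' : Set W}
    (h : ∀ u v, G u v → G' u v) (hP : P ⊆ P') {x y : W}
    (hr : Relation.ReflTransGen (Rin G P) x y) : Relation.ReflTransGen (Rin G' P') x y :=
  Relation.ReflTransGen.mono (fun _ _ h1 => ⟨h _ _ h1.1, hP h1.2.1, hP h1.2.2⟩) _ _ hr

/-- There are `k` disjoint paths from `X` to `Y`. -/
def Linked {W : Type*} (G : W → W → Prop) (X Y : Set W) (k : ℕ) : Prop :=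
  ∃ (P : Fin k → Set W) (a b : Fin k → W),
    (∀ i, a i ∈ X ∧ b i ∈ Y ∧ a i ∈ P i ∧ b i ∈ P i) ∧
    (∀ i j z, z ∈ P i → z ∈ P j → i = j) ∧
    (∀ i, ∀ z ∈ P i, Relation.ReflTransGen (Rin G (P i)) (a i) z ∧
      Relation.ReflTransGen (Rin G (P i)) z (b i))

theorem Linked.mono {W : Type*} {G G' : W → W → Prop} {X Y : Set W} {k : ℕ}
    (h : ∀ u v, G u v → G' u v) (hl : Linked G X Y k) : Linked G' X Y k := by
  obtain ⟨P, a, b, h1, h2, h3⟩ := hl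
  exact ⟨P, a, b, h1, h2, fun i z hz =>
    ⟨Rin.mono h subset_rfl (h3 i z hz).1, Rin.mono h subset_rfl (h3 i z hz).2⟩⟩

theorem surj_of_inj_card {W : Type*} [Finite W] {k : ℕ} {Z : Set W} (f : Fin k → W)
    (hf : Function.Injective f) (hZ : ∀ i, f i ∈ Z) (hc : Z.ncard ≤ k) :
    ∀ z ∈ Z, ∃ i, f i = z := by
  have h1 : Set.range f ⊆ Z := by rintro _ ⟨i, rfl⟩; exact hZ i
  have h2 : (Set.range f).ncard = k := by
    rw [← Set.image_univ, Set.ncard_image_of_injective _ hf, Set.ncard_univ]; simp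
  have h3 : Set.range f = Z := Set.eq_of_subset_of_ncard_le h1 (by omega) (Set.toFinite _)
  intro z hz
  rw [← h3] at hz
  exact hz

theorem menger {W : Type*} [Finite W] : ∀ (n : ℕ) (G : W → W → Prop) (X Y : Set W) (k : ℕ),
    {p : W × W | G p.1 p.2}.ncard ≤ n →
    (∀ A B : Set W, A ∪ B = Set.univ → X ⊆ A → Y ⊆ B →
      (∀ u ∈ A \ B, ∀ v ∈ B \ A, ¬ G u v) → k ≤ (A ∩ B).ncard) → Linked G X Y k := by
  classical
  intro n
  induction n with
  | zero =>
    intro G X Y k hn hsep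
    have hno : ∀ u v, ¬ G u v := by
      intro u v h
      have : {p : W × W | G p.1 p.2} = ∅ := by
        rwa [Nat.le_zero, Set.ncard_eq_zero (Set.toFinite _)] at hn
      have h2 : (u, v) ∈ {p : W × W | G p.1 p.2} := h
      rw [this] at h2; exact h2
    have h1 := hsep X (Y ∪ Xᶜ) (by ext z; simp; tauto) subset_rfl Set.subset_union_left
      (fun u _ v _ => hno u v)
    have h2 : X ∩ (Y ∪ Xᶜ) = X ∩ Y := by ext z; simp; tauto
    rw [h2] at h1
    obtain ⟨Z, hZ, hc⟩ := Set.exists_subset_card_eq h1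
    have hfin := Set.toFinite Z
    have : Nat.card Z = k := by rw [← hc]; rfl
    let e := (Finite.equivFinOfCardEq this).symm
    refine ⟨fun i => {(e i : W)}, fun i => e i, fun i => e i, ?_, ?_, ?_⟩
    · intro i
      exact ⟨(hZ (e i).2).1, (hZ (e i).2).2, rfl, rfl⟩
    · intro i j z hi hj
      apply e.injective
      apply Subtype.ext
      rw [Set.mem_singleton_iff] at hi hj
      rw [← hi, hj]
    · intro i z hz
      rw [Set.mem_singleton_iff] at hz
      subst hz
      exact ⟨.refl, .refl⟩
  | succ n ih =>
    intro G X Y k hn hsep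
    by_cases hem : ∃ x y, G x y
    swap
    · refine ih G X Y k ?_ hsep
      have : {p : W × W | G p.1 p.2} = ∅ := by
        ext p; simp only [Set.mem_ofPred_eq, Set.mem_empty_iff_false, iff_false]
        exact fun h => hem ⟨_, _, h⟩
      rw [this]; simp
    obtain ⟨x, y, hxy⟩ := hem
    have hcard : ∀ G' : W → W → Prop, (∀ u v, G' u v → G u v) → ¬ G' x y →
        {p : W × W | G' p.1 p.2}.ncard ≤ n := by
      intro G' h1 h2
      have : {p : W × W | G' p.1 p.2} ⊂ {p : W × W | G p.1 p.2} := by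
        refine ⟨fun p hp => h1 _ _ hp, fun h => h2 ?_⟩
        exact @h (x, y) hxy
      have := Set.ncard_lt_ncard this (Set.toFinite _)
      omega
    let G' : W → W → Prop := fun u v => G u v ∧ ¬ (u = x ∧ v = y)
    by_cases hs : ∀ A B : Set W, A ∪ B = Set.univ → X ⊆ A → Y ⊆ B →
      (∀ u ∈ A \ B, ∀ v ∈ B \ A, ¬ G' u v) → k ≤ (A ∩ B).ncard
    · exact (ih G' X Y k (hcard G' (fun u v h => h.1) (fun h => h.2 ⟨rfl, rfl⟩)) hs).mono
        (fun u v h => h.1)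
    push Not at hs
    obtain ⟨A, B, hAB, hXA, hYB, hno, hlt⟩ := hs
    have hcov : ∀ z, z ∈ A ∨ z ∈ B := fun z => by
      have : z ∈ A ∪ B := hAB ▸ Set.mem_univ z
      exact this
    have hxyAB : (x ∈ A ∧ x ∉ B) ∧ (y ∈ B ∧ y ∉ A) := by
      by_contra hcon
      have := hsep A B hAB hXA hYB (by
        intro u hu v hv huv
        refine hno u hu v hv ⟨huv, ?_⟩
        rintro ⟨rfl, rfl⟩
        exact hcon ⟨hu, hv⟩)
      omega
    obtain ⟨⟨hxA, hxB⟩, hyB, hyA⟩ := hxyAB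
    have hc1 : (insert x (A ∩ B)).ncard ≤ k := by
      rw [Set.ncard_insert_of_notMem (by simp [hxB])]; omega
    have hc2 : (insert y (A ∩ B)).ncard ≤ k := by
      rw [Set.ncard_insert_of_notMem (by simp [hyA])]; omega
    let G1 : W → W → Prop := fun u v => G u v ∧ u ∈ A ∧ u ∉ B ∧ u ≠ x
    let G2 : W → W → Prop := fun u v => G u v ∧ v ∈ B ∧ v ∉ A ∧ v ≠ y
    have hG1A : ∀ u v, G1 u v → v ∈ A := by
      rintro u v ⟨h1, h2, h3, h4⟩
      by_contra hv
      exact hno u ⟨h2, h3⟩ v ⟨(hcov v).resolve_left hv, hv⟩ ⟨h1, fun h => h4 h.1⟩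
    have hG2B : ∀ u v, G2 u v → u ∈ B := by
      rintro u v ⟨h1, h2, h3, h4⟩
      by_contra hv
      exact hno u ⟨(hcov u).resolve_right hv, hv⟩ v ⟨h2, h3⟩ ⟨h1, fun h => h4 h.2⟩
    have L1 : Linked G1 X (insert x (A ∩ B)) k := by
      refine ih G1 _ _ _ (hcard G1 (fun u v h => h.1) (fun h => h.2.2.2 rfl)) ?_
      intro C D hCD hXC hZD hnoCD
      have hcov' : ∀ z, z ∈ C ∨ z ∈ D := fun z => by
        have : z ∈ C ∪ D := hCD ▸ Set.mem_univ z
        exact this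
      refine (hsep (C ∩ A) (D ∪ B) ?_ (Set.subset_inter hXC hXA)
        (hYB.trans Set.subset_union_right) ?_).trans ?_
      · ext z
        have := hcov z; have := hcov' z
        simp; tauto
      · rintro u ⟨⟨huC, huA⟩, hu⟩ v ⟨hv, hv'⟩ huv
        simp only [Set.mem_union, not_or] at hu
        have hux : u ≠ x := by
          rintro rfl
          exact hu.1 (hZD (Set.mem_insert _ _))
        have hg1 : G1 u v := ⟨huv, huA, hu.2, hux⟩
        have hvA := hG1A _ _ hg1
        have hvC : v ∉ C := fun h => hv' ⟨h, hvA⟩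
        exact hnoCD u ⟨huC, hu.1⟩ v ⟨(hcov' v).resolve_left hvC, hvC⟩ hg1
      · apply Set.ncard_le_ncard _ (Set.toFinite _)
        rintro z ⟨⟨h1, h2⟩, h3⟩
        refine ⟨h1, h3.elim id fun h => hZD (Set.mem_insert_of_mem _ ⟨h2, h⟩)⟩
    have L2 : Linked G2 (insert y (A ∩ B)) Y k := by
      refine ih G2 _ _ _ (hcard G2 (fun u v h => h.1) (fun h => h.2.2.2 rfl)) ?_
      intro C D hCD hZC hYD hnoCD
      have hcov' : ∀ z, z ∈ C ∨ z ∈ D := fun z => by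
        have : z ∈ C ∪ D := hCD ▸ Set.mem_univ z
        exact this
      refine (hsep (C ∪ A) (D ∩ B) ?_ (hXA.trans Set.subset_union_right)
        (Set.subset_inter hYD hYB) ?_).trans ?_
      · ext z
        have := hcov z; have := hcov' z
        simp; tauto
      · rintro u ⟨hu, hu'⟩ v ⟨⟨hvD, hvB⟩, hv⟩ huv
        simp only [Set.mem_union, not_or] at hv
        have hvy : v ≠ y := by
          rintro rfl
          exact hv.1 (hZC (Set.mem_insert _ _))
        have hg2 : G2 u v := ⟨huv, hvB, hv.2, hvy⟩
        have huB := hG2B _ _ hg2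
        have huD : u ∉ D := fun h => hu' ⟨h, huB⟩
        exact hnoCD u ⟨(hcov' u).resolve_right huD, huD⟩ v ⟨hvD, hv.1⟩ hg2
      · apply Set.ncard_le_ncard _ (Set.toFinite _)
        rintro z ⟨h3, ⟨h1, h2⟩⟩
        refine ⟨h3.elim id fun h => hZC (Set.mem_insert_of_mem _ ⟨h, h2⟩), h1⟩
    obtain ⟨P1, a1, b1, hm1, hd1, hr1⟩ := L1
    obtain ⟨P2, a2, b2, hm2, hd2, hr2⟩ := L2
    have hb1 : Function.Injective b1 := fun i j h =>
      hd1 i j _ (hm1 i).2.2.2 (h ▸ (hm1 j).2.2.2)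
    have ha2 : Function.Injective a2 := fun i j h =>
      hd2 i j _ (hm2 i).2.2.1 (h ▸ (hm2 j).2.2.1)
    have sb1 := surj_of_inj_card b1 hb1 (fun i => (hm1 i).2.1) hc1
    have sa2 := surj_of_inj_card a2 ha2 (fun i => (hm2 i).1) hc2
    have hP1A : ∀ i, ∀ z ∈ P1 i, z ∈ A := by
      intro i z hz
      rcases (hr1 i z hz).1.cases_tail with h | ⟨c, -, hc⟩
      · rw [h]; exact hXA (hm1 i).1
      · exact hG1A _ _ hc.1
    have hP2B : ∀ i, ∀ z ∈ P2 i, z ∈ B := by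
      intro i z hz
      rcases (hr2 i z hz).2.cases_head with h | ⟨c, hc, -⟩
      · rw [h]; exact hYB (hm2 i).2.1
      · exact hG2B _ _ hc.1
    have hm : ∀ i, ∃ j, a2 j = if b1 i = x then y else b1 i := by
      intro i
      apply sa2
      split_ifs with h
      · exact Set.mem_insert _ _
      · exact Set.mem_insert_of_mem _ ((hm1 i).2.1.resolve_left h)
    choose m hm using hm
    have hmi : Function.Injective m := by
      intro i j h
      have h1 := hm i
      rw [h, hm j] at h1
      apply hb1
      have hyi : b1 i ≠ y := fun h => hyA (h ▸ hP1A i _ (hm1 i).2.2.2)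
      have hyj : b1 j ≠ y := fun h => hyA (h ▸ hP1A j _ (hm1 j).2.2.2)
      split_ifs at h1 with h2 h3 h3
      · rw [h2, h3]
      · exact absurd h1.symm hyi
      · exact absurd h1 hyj
      · exact h1.symm
    have hcross : ∀ i j z, z ∈ P1 i → z ∈ P2 j → m i = j := by
      intro i j z h1 h2
      have hz : z ∈ A ∩ B := ⟨hP1A i z h1, hP2B j z h2⟩
      obtain ⟨i', rfl⟩ := sb1 z (Set.mem_insert_of_mem _ hz)
      have := hd1 i' i _ (hm1 i').2.2.2 h1
      subst this
      have hne : b1 i' ≠ x := fun h => hxB (h ▸ hz.2)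
      have h3 := hm i'
      rw [if_neg hne] at h3
      exact hd2 _ _ _ (hm2 _).2.2.1 (h3 ▸ h2)
    have hlink : ∀ i, Relation.ReflTransGen (Rin G (P1 i ∪ P2 (m i))) (b1 i) (a2 (m i)) := by
      intro i
      by_cases h : b1 i = x
      · apply Relation.ReflTransGen.single
        refine ⟨?_, Or.inl (hm1 i).2.2.2, Or.inr (hm2 _).2.2.1⟩
        rw [hm i, if_pos h, h]; exact hxy
      · rw [hm i, if_neg h]
    refine ⟨fun i => P1 i ∪ P2 (m i), a1, fun i => b2 (m i), ?_, ?_, ?_⟩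
    · exact fun i => ⟨(hm1 i).1, (hm2 _).2.1, Or.inl (hm1 i).2.2.1, Or.inr (hm2 _).2.2.2⟩
    · rintro i j z (h1 | h1) (h2 | h2)
      · exact hd1 _ _ _ h1 h2
      · exact hmi (hcross _ _ _ h1 h2)
      · exact hmi (hcross _ _ _ h2 h1).symm
      · exact hmi (hd2 _ _ _ h1 h2)
    · have e1 : ∀ i {p q}, Relation.ReflTransGen (Rin G1 (P1 i)) p q →
          Relation.ReflTransGen (Rin G (P1 i ∪ P2 (m i))) p q := fun i _ _ h =>
        Rin.mono (fun u v h => h.1) Set.subset_union_left h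
      have e2 : ∀ i {p q}, Relation.ReflTransGen (Rin G2 (P2 (m i))) p q →
          Relation.ReflTransGen (Rin G (P1 i ∪ P2 (m i))) p q := fun i _ _ h =>
        Rin.mono (fun u v h => h.1) Set.subset_union_right h
      rintro i z (hz | hz)
      · exact ⟨e1 i (hr1 i z hz).1, (e1 i (hr1 i z hz).2).trans ((hlink i).trans
          (e2 i (hr2 _ _ (hm2 _).2.2.1).2))⟩
      · exact ⟨(e1 i (hr1 i _ (hm1 i).2.2.2).1).trans ((hlink i).trans
          (e2 i (hr2 _ z hz).1)), e2 i (hr2 _ z hz).2⟩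


/-- A model of `H` plus an apex in the part `U` of `G`, with the apex outside `S`. -/
def Model {V W : Type*} (G : W → W → Prop) (H : V → V → Prop) (U S : Set W) : Prop :=
  ∃ (w : W) (β : V → Set W) (ρ : V → W), w ∈ U ∧ w ∉ S ∧ (∀ v, β v ⊆ U) ∧ (∀ v, w ∉ β v) ∧
    (∀ v, ρ v ∈ β v) ∧ (∀ u v z, z ∈ β u → z ∈ β v → u = v) ∧
    (∀ v, ∀ z ∈ β v, Relation.ReflTransGen (Rin G (β v)) z (ρ v)) ∧
    (∀ v, ∃ z ∈ β v, G w z) ∧ (∀ u v, H u v → ∃ z ∈ β v, G (ρ u) z)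

/-- Relative well-in-connectedness. -/
def Wic {W : Type*} (G : W → W → Prop) (U S : Set W) : Prop :=
  ∀ A B : Set W, A ∪ B = U → (∀ u ∈ B \ A, ∀ v ∈ A \ B, ¬ G u v) → (A \ B).Nonempty →
    (B \ A).Nonempty → S ⊆ A → S.ncard ≤ (A ∩ B).ncard

theorem exists_notMem_of_card {W : Type*} [Finite W] {S C D : Set W} (hSD : S ⊆ D)
    (h : (C ∩ D).ncard < S.ncard) : ∃ s ∈ S, s ∉ C := by
  by_contra hcon
  push Not at hcon
  have := Set.ncard_le_ncard (s := S) (t := C ∩ D) (fun s hs => ⟨hcon s hs, hSD hs⟩)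
    (Set.toFinite _)
  omega

theorem case_full {V W : Type*} [Finite V] [Finite W] (H : V → V → Prop)
    (G : W → W → Prop) (U S : Set W) (τ : V → W) (hτ : Function.Injective τ)
    (hS : Set.range τ = S) (hHG : ∀ a b, H a b → G (τ a) (τ b)) (hSU : S ⊆ U)
    (w : W) (hwU : w ∈ U) (hwS : w ∉ S) (hwic : Wic G U S) (hww : ¬ G w w)
    (hcl : ∀ x, G w x → x ∈ U) : Model G H U S := by
  let Gw : W → W → Prop := fun u v => G u v ∧ u ≠ w ∧ v ≠ w ∧ u ∈ U ∧ v ∈ U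
  have L : Linked Gw {x | G w x} S S.ncard := by
    refine menger _ _ _ _ _ le_rfl ?_
    intro C D hCD hNC hSD hno
    have hcov : ∀ z, z ∈ C ∨ z ∈ D := fun z => by
      have : z ∈ C ∪ D := hCD ▸ Set.mem_univ z
      exact this
    by_contra hlt
    push Not at hlt
    obtain ⟨s, hs, hsC⟩ := exists_notMem_of_card hSD hlt
    have hsw : s ≠ w := fun h => hwS (h ▸ hs)
    have := hwic ((D \ {w}) ∩ U) ((C ∪ {w}) ∩ U) ?_ ?_ ?_ ?_ ?_
    · have h2 := Set.ncard_le_ncard (s := (D \ {w}) ∩ U ∩ ((C ∪ {w}) ∩ U)) (t := C ∩ D) (by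
        rintro z ⟨⟨⟨h1, h2⟩, h3⟩, ⟨h4 | h4, h5⟩⟩
        · exact ⟨h4, h1⟩
        · exact absurd h4 h2) (Set.toFinite _)
      omega
    · ext z
      have := hcov z
      simp only [Set.mem_union, Set.mem_inter_iff, Set.mem_sdiff, Set.mem_singleton_iff]
      tauto
    · rintro u ⟨⟨hu1, hu2⟩, hu3⟩ v ⟨⟨⟨hv1, hv2⟩, hv3⟩, hv4⟩ huv
      have hvC : v ∉ C := fun h => hv4 ⟨Or.inl h, hv3⟩
      by_cases huw : u = w
      · subst huw; exact hvC (hNC huv)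
      · have huC : u ∈ C := hu1.resolve_right huw
        have huD : u ∉ D := fun h => hu3 ⟨⟨h, huw⟩, hu2⟩
        exact hno u ⟨huC, huD⟩ v ⟨hv1, hvC⟩ ⟨huv, huw, hv2, hu2, hv3⟩
    · exact ⟨s, ⟨⟨hSD hs, hsw⟩, hSU hs⟩, fun h => h.1.elim hsC hsw⟩
    · exact ⟨w, ⟨Or.inr rfl, hwU⟩, fun h => h.1.2 rfl⟩
    · intro z hz
      exact ⟨⟨hSD hz, fun h => hwS (h ▸ hz)⟩, hSU hz⟩
  obtain ⟨P, a, b, hm, hd, hr⟩ := L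
  have hb : Function.Injective b := fun i j h => hd i j _ (hm i).2.2.2 (h ▸ (hm j).2.2.2)
  have sb := surj_of_inj_card b hb (fun i => (hm i).2.1) le_rfl
  have hP : ∀ i, ∀ z ∈ P i, z ∈ U ∧ z ≠ w := by
    intro i z hz
    rcases (hr i z hz).1.cases_tail with h | ⟨c, -, hc⟩
    · rw [h]
      have h1 : G w (a i) := (hm i).1
      exact ⟨hcl _ h1, fun h => hww (h ▸ h1)⟩
    · exact ⟨hc.1.2.2.2.2, hc.1.2.2.1⟩
  have hidx : ∀ v, ∃ i, b i = τ v := fun v => sb _ (hS ▸ ⟨v, rfl⟩)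
  choose ι hι using hidx
  refine ⟨w, fun v => P (ι v), τ, hwU, hwS, fun v z hz => (hP _ z hz).1,
    fun v h => (hP _ w h).2 rfl, fun v => hι v ▸ (hm _).2.2.2, ?_, ?_, ?_, ?_⟩
  · intro u v z h1 h2
    have := hd _ _ _ h1 h2
    apply hτ
    rw [← hι u, ← hι v, this]
  · intro v z hz
    rw [← hι v]
    exact Rin.mono (fun u v h => h.1) subset_rfl (hr _ z hz).2
  · exact fun v => ⟨a (ι v), (hm _).2.2.1, (hm _).1⟩
  · exact fun u v h => ⟨τ v, hι v ▸ (hm _).2.2.2, hHG u v h⟩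

theorem main_ind {V W : Type*} [Finite V] [Finite W] (H : V → V → Prop) (r : V)
    (hpar : ∀ T : Set V, r ∈ T → T ≠ Set.univ → ∃ v, v ∉ T ∧ ∃ p ∈ T, H v p)
    (huniq : ∀ v a b, H v a → H v b → a = b) :
    ∀ (n : ℕ) (G : W → W → Prop) (U S : Set W) (T : Set V) (τ : V → W),
      U.ncard + (Nat.card V - T.ncard) < n → r ∈ T → (∀ a ∈ T, ∀ b, H a b → b ∈ T) →
      Set.InjOn τ T → τ '' T = S → (∀ a b, a ∈ T → H a b → G (τ a) (τ b)) →
      S ⊆ U → (∃ z ∈ U, z ∉ S) → Wic G U S →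
      (∀ u ∈ U, u ∉ S → ¬ G u u ∧ (∀ x, G u x → x ∈ U) ∧ Nat.card V ≤ {x | G u x}.ncard) →
      Model G H U S := by
  classical
  intro n
  induction n with
  | zero => intro G U S T τ hn; omega
  | succ n ih =>
    intro G U S T τ hn hrT hTcl hτ hS hHG hSU hUS hwic hdeg
    by_cases hT : T = Set.univ
    · subst hT
      obtain ⟨w, hwU, hwS⟩ := hUS
      exact case_full H G U S τ (Set.injOn_univ.1 hτ) (by rw [← hS, Set.image_univ])
        (fun a b h => hHG a b trivial h) hSU w hwU hwS hwic (hdeg w hwU hwS).1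
        (hdeg w hwU hwS).2.1
    have hST : S.ncard = T.ncard := by rw [← hS]; exact Set.InjOn.ncard_image hτ
    have hTlt : T.ncard < Nat.card V := by
      rw [← Set.ncard_univ]
      exact Set.ncard_lt_ncard (Set.ssubset_univ_iff.2 hT) (Set.toFinite _)
    obtain ⟨v, hvT, p, hpT, hvp⟩ := hpar T hrT hT
    have hpS : τ p ∈ S := hS ▸ ⟨p, hpT, rfl⟩
    -- an in-neighbour of `τ p` outside `S`
    have hx : ∃ x ∈ U, x ∉ S ∧ G x (τ p) := by
      by_contra hcon
      push Not at hcon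
      obtain ⟨z, hzU, hzS⟩ := hUS
      have := hwic S (U \ {τ p}) ?_ ?_ ?_ ?_ subset_rfl
      · have h2 : S ∩ (U \ {τ p}) = S \ {τ p} := by
          ext y
          have := @hSU y
          simp only [Set.mem_inter_iff, Set.mem_sdiff]; tauto
        rw [h2, Set.ncard_sdiff_singleton_of_mem hpS] at this
        have h3 : 0 < S.ncard := (Set.ncard_pos (Set.toFinite _)).2 ⟨_, hpS⟩
        omega
      · ext y
        have := @hSU y
        by_cases hy : y = τ p
        · subst hy
          simp [hpS, hSU hpS]
        · simp [hy]; tauto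
      · rintro a ⟨⟨ha1, ha2⟩, ha3⟩ b ⟨hb1, hb2⟩ hab
        have : b = τ p := by
          by_contra h
          exact hb2 ⟨hSU hb1, h⟩
        subst this
        exact hcon a ha1 ha3 hab
      · exact ⟨τ p, hpS, fun h => h.2 rfl⟩
      · exact ⟨z, ⟨hzU, fun h => hzS (h ▸ hpS)⟩, hzS⟩
    obtain ⟨x, hxU, hxS, hxp⟩ := hx
    by_cases hw' : Wic G U (insert x S)
    · -- extend `S` by `x`
      let τ' : V → W := fun a => if a = v then x else τ a
      have hτv : τ' v = x := if_pos rfl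
      have hτT : ∀ a ∈ T, τ' a = τ a := fun a ha => if_neg (by rintro rfl; exact hvT ha)
      have hM : Model G H U (insert x S) := by
        refine ih G U (insert x S) (insert v T) τ' ?_ (Set.mem_insert_of_mem _ hrT) ?_ ?_ ?_ ?_
          (Set.insert_subset hxU hSU) ?_ hw' ?_
        · rw [Set.ncard_insert_of_notMem hvT]; omega
        · rintro a (rfl | ha) b hab
          · rw [huniq _ _ _ hab hvp]; exact Set.mem_insert_of_mem _ hpT
          · exact Set.mem_insert_of_mem _ (hTcl a ha b hab)
        · rw [Set.injOn_insert hvT]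
          refine ⟨fun a ha b hb h => hτ ha hb ?_, ?_⟩
          · rwa [hτT a ha, hτT b hb] at h
          · rintro ⟨a, ha, h⟩
            rw [hτT a ha, hτv] at h
            rw [← h, ← hS] at hxS
            exact hxS ⟨a, ha, rfl⟩
        · rw [Set.image_insert_eq, hτv, ← hS]
          congr 1
          exact Set.image_congr hτT
        · rintro a b (rfl | ha) hab
          · have := huniq _ _ _ hab hvp
            subst this
            rw [hτv, hτT _ hpT]; exact hxp
          · rw [hτT _ ha, hτT _ (hTcl a ha b hab)]; exact hHG a b ha hab
        · by_contra hcon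
          push Not at hcon
          obtain ⟨h1, h2, h3⟩ := hdeg x hxU hxS
          have h4 := Set.ncard_le_ncard (s := {y | G x y}) (t := S) (by
            intro y hy
            have hy : G x y := hy
            refine (hcon y (h2 y hy)).resolve_left ?_
            rintro rfl
            exact h1 hy) (Set.toFinite _)
          omega
        · exact fun u hu huS => hdeg u hu fun h => huS (Set.mem_insert_of_mem _ h)
      obtain ⟨w, β, ρ, h1, h2, h3⟩ := hM
      exact ⟨w, β, ρ, h1, fun h => h2 (Set.mem_insert_of_mem _ h), h3⟩
    -- a separation of order exactly `|S|`
    unfold Wic at hw'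
    push Not at hw'
    obtain ⟨A, B, hAB, hno, hAne, hBne, hxSA, hlt⟩ := hw'
    have hSA : S ⊆ A := (Set.subset_insert _ _).trans hxSA
    have hAU : A ⊆ U := hAB ▸ Set.subset_union_left
    have hBU : B ⊆ U := hAB ▸ Set.subset_union_right
    have hcovU : ∀ z ∈ U, z ∈ A ∨ z ∈ B := fun z hz => by
      have : z ∈ A ∪ B := hAB ▸ hz
      exact this
    have hord : (A ∩ B).ncard = S.ncard := by
      have h1 := hwic A B hAB hno hAne hBne hSA
      rw [Set.ncard_insert_of_notMem hxS] at hlt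
      omega
    let GA : W → W → Prop := fun u v => G u v ∧ u ∈ A ∧ v ∈ A
    have L : Linked GA (A ∩ B) S S.ncard := by
      refine menger _ _ _ _ _ le_rfl ?_
      intro C D hCD hXC hSD hnoCD
      have hcov : ∀ z, z ∈ C ∨ z ∈ D := fun z => by
        have : z ∈ C ∪ D := hCD ▸ Set.mem_univ z
        exact this
      by_contra hlt
      push Not at hlt
      obtain ⟨s, hs, hsC⟩ := exists_notMem_of_card hSD hlt
      have := hwic (D ∩ A) ((C ∩ U) ∪ B) ?_ ?_ ?_ ?_ ?_
      · have h2 := Set.ncard_le_ncard (s := D ∩ A ∩ ((C ∩ U) ∪ B)) (t := C ∩ D) (by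
          rintro z ⟨⟨h1, h2⟩, h4 | h4⟩
          · exact ⟨h4.1, h1⟩
          · exact ⟨hXC ⟨h2, h4⟩, h1⟩) (Set.toFinite _)
        omega
      · ext z
        have := hcov z
        have := hcovU z
        have := @hAU z
        have := @hBU z
        simp only [Set.mem_union, Set.mem_inter_iff]
        tauto
      · rintro u ⟨hu1, hu2⟩ v ⟨⟨hv1, hv2⟩, hv3⟩ huv
        have hvB : v ∉ B := fun h => hv3 (Or.inr h)
        have hvC : v ∉ C := fun h => hv3 (Or.inl ⟨h, hAU hv2⟩)
        by_cases huA : u ∈ A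
        · have huD : u ∉ D := fun h => hu2 ⟨h, huA⟩
          exact hnoCD u ⟨(hcov u).resolve_right huD, huD⟩ v ⟨hv1, hvC⟩ ⟨huv, huA, hv2⟩
        · have huB : u ∈ B := hu1.elim (fun h => (hcovU u h.2).resolve_left huA) id
          exact hno u ⟨huB, huA⟩ v ⟨hv2, hvB⟩ huv
      · exact ⟨s, ⟨hSD hs, hSA hs⟩, fun h => h.elim (fun h => hsC h.1)
          fun h => hsC (hXC ⟨hSA hs, h⟩)⟩
      · obtain ⟨b, hb1, hb2⟩ := hBne
        exact ⟨b, Or.inr hb1, fun h => hb2 h.2⟩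
      · exact fun z hz => ⟨hSD hz, hSA hz⟩
    obtain ⟨P, a, b, hm, hd, hr⟩ := L
    have hb : Function.Injective b := fun i j h => hd i j _ (hm i).2.2.2 (h ▸ (hm j).2.2.2)
    have ha : Function.Injective a := fun i j h => hd i j _ (hm i).2.2.1 (h ▸ (hm j).2.2.1)
    have sb := surj_of_inj_card b hb (fun i => (hm i).2.1) le_rfl
    have sa := surj_of_inj_card a ha (fun i => (hm i).1) hord.le
    have hPA : ∀ i, ∀ z ∈ P i, z ∈ A := by
      intro i z hz
      rcases (hr i z hz).1.cases_tail with h | ⟨c, -, hc⟩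
      · rw [h]; exact (hm i).1.1
      · exact hc.1.2.2
    have hch : ∀ z, ∃ (Q : Set W) (q : W),
        (z ∈ A ∩ B → ∃ i, a i = z ∧ Q = P i ∧ q = b i) ∧ (z ∉ A ∩ B → Q = {z} ∧ q = z) := by
      intro z
      by_cases hz : z ∈ A ∩ B
      · obtain ⟨i, hi⟩ := sa z hz
        exact ⟨P i, b i, fun _ => ⟨i, hi, rfl, rfl⟩, fun h => absurd hz h⟩
      · exact ⟨{z}, z, fun h => absurd h hz, fun _ => ⟨rfl, rfl⟩⟩
    choose Q e hQ1 hQ2 using hch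
    have hzQ : ∀ z, z ∈ Q z ∧ e z ∈ Q z ∧
        ∀ y ∈ Q z, Relation.ReflTransGen (Rin G (Q z)) y (e z) := by
      intro z
      by_cases hz : z ∈ A ∩ B
      · obtain ⟨i, h1, h2, h3⟩ := hQ1 z hz
        rw [h2, h3]
        exact ⟨h1 ▸ (hm i).2.2.1, (hm i).2.2.2, fun y hy =>
          Rin.mono (fun u v h => h.1) subset_rfl (hr i y hy).2⟩
      · obtain ⟨h1, h2⟩ := hQ2 z hz
        rw [h1, h2]
        refine ⟨rfl, rfl, ?_⟩
        rintro y rfl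
        exact .refl
    have hQd : ∀ z ∈ B, ∀ z' ∈ B, ∀ y, y ∈ Q z → y ∈ Q z' → z = z' := by
      intro z hz z' hz' y hy hy'
      by_cases h : z ∈ A ∩ B
      · obtain ⟨i, h1, h2, h3⟩ := hQ1 z h
        by_cases h' : z' ∈ A ∩ B
        · obtain ⟨i', h1', h2', h3'⟩ := hQ1 z' h'
          rw [h2] at hy; rw [h2'] at hy'
          rw [← h1, ← h1', hd _ _ _ hy hy']
        · rw [(hQ2 z' h').1] at hy'
          rw [h2] at hy
          have : y = z' := hy'
          subst this
          exact absurd ⟨hPA _ _ hy, hz'⟩ h'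
      · rw [(hQ2 z h).1] at hy
        have : y = z := hy
        subst this
        by_cases h' : z' ∈ A ∩ B
        · obtain ⟨i', h1', h2', h3'⟩ := hQ1 z' h'
          rw [h2'] at hy'
          exact absurd ⟨hPA _ _ hy', hz⟩ h
        · rw [(hQ2 z' h').1] at hy'
          exact hy'
    have hQU : ∀ z ∈ B, Q z ⊆ U := by
      intro z hz y hy
      by_cases h : z ∈ A ∩ B
      · obtain ⟨i, h1, h2, h3⟩ := hQ1 z h
        rw [h2] at hy
        exact hAU (hPA _ _ hy)
      · rw [(hQ2 z h).1] at hy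
        have : y = z := hy
        rw [this]; exact hBU hz
    let G' : W → W → Prop := fun u v =>
      (u ∈ B ∧ u ∉ A ∧ G u v) ∨ (u ∈ A ∩ B ∧ v ∈ A ∩ B ∧ G (e u) (e v))
    have hG'B : ∀ u, u ∈ B → u ∉ A → ∀ v, G' u v ↔ G u v := by
      intro u hu huA v
      constructor
      · rintro (h | h)
        · exact h.2.2
        · exact absurd h.1.1 huA
      · exact fun h => Or.inl ⟨hu, huA, h⟩
    have hτ' : ∀ c, ∃ z, c ∈ T → z ∈ A ∩ B ∧ e z = τ c := by
      intro c
      by_cases hc : c ∈ T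
      · obtain ⟨i, hi⟩ := sb (τ c) (hS ▸ ⟨c, hc, rfl⟩)
        refine ⟨a i, fun _ => ⟨(hm i).1, ?_⟩⟩
        obtain ⟨i', h1, h2, h3⟩ := hQ1 (a i) (hm i).1
        rw [h3, ha h1, hi]
      · exact ⟨τ c, fun h => absurd h hc⟩
    choose τ' hτ' using hτ'
    have hτ'i : Set.InjOn τ' T := by
      intro c hc d hd h
      apply hτ hc hd
      rw [← (hτ' c hc).2, ← (hτ' d hd).2, h]
    have hM : Model G' H B (A ∩ B) := by
      refine ih G' B (A ∩ B) T τ' ?_ hrT hTcl hτ'i ?_ ?_ Set.inter_subset_right ?_ ?_ ?_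
      · have : B.ncard < U.ncard := by
          apply Set.ncard_lt_ncard _ (Set.toFinite _)
          obtain ⟨c, hc1, hc2⟩ := hAne
          exact ⟨hBU, fun h => hc2 (h (hAU hc1))⟩
        omega
      · apply Set.eq_of_subset_of_ncard_le _ _ (Set.toFinite _)
        · rintro _ ⟨c, hc, rfl⟩
          exact (hτ' c hc).1
        · rw [Set.InjOn.ncard_image hτ'i]; omega
      · intro c d hc hcd
        have hd := hTcl c hc d hcd
        refine Or.inr ⟨(hτ' c hc).1, (hτ' d hd).1, ?_⟩
        rw [(hτ' c hc).2, (hτ' d hd).2]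
        exact hHG c d hc hcd
      · obtain ⟨c, hc1, hc2⟩ := hBne
        exact ⟨c, hc1, fun h => hc2 h.1⟩
      · intro C D hCD hnoCD hCne hDne hSC
        rw [hord]
        have hDB : D ⊆ B := hCD ▸ Set.subset_union_right
        have hCB : C ⊆ B := hCD ▸ Set.subset_union_left
        have hcovB : ∀ z ∈ B, z ∈ C ∨ z ∈ D := fun z hz => by
          have : z ∈ C ∪ D := hCD ▸ hz
          exact this
        refine (hwic (C ∪ A) D ?_ ?_ ?_ ?_ (hSA.trans Set.subset_union_right)).trans ?_
        · rw [← hAB, ← hCD]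
          ext z; simp only [Set.mem_union]; tauto
        · rintro u ⟨hu1, hu2⟩ v ⟨hv1, hv2⟩ huv
          have huC : u ∉ C := fun h => hu2 (Or.inl h)
          have huA : u ∉ A := fun h => hu2 (Or.inr h)
          have huB := hDB hu1
          by_cases hvB : v ∈ B
          · exact hnoCD u ⟨hu1, huC⟩ v ⟨(hcovB v hvB).resolve_right hv2, hv2⟩
              ((hG'B u huB huA v).2 huv)
          · exact hno u ⟨huB, huA⟩ v ⟨hv1.resolve_left fun h => hvB (hCB h), hvB⟩ huv
        · obtain ⟨c, hc1, hc2⟩ := hCne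
          exact ⟨c, Or.inl hc1, hc2⟩
        · obtain ⟨c, hc1, hc2⟩ := hDne
          exact ⟨c, hc1, fun h => h.elim hc2 fun h => hc2 (hSC ⟨h, hDB hc1⟩)⟩
        · apply Set.ncard_le_ncard _ (Set.toFinite _)
          rintro z ⟨h1, h2⟩
          exact ⟨h1.elim id fun h => hSC ⟨h, hDB h2⟩, h2⟩
      · intro u huB huS
        have huA : u ∉ A := fun h => huS ⟨h, huB⟩
        obtain ⟨h1, h2, h3⟩ := hdeg u (hBU huB) fun h => huA (hSA h)
        refine ⟨fun h => h1 ((hG'B u huB huA u).1 h), ?_, ?_⟩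
        · intro y hy
          have hy := (hG'B u huB huA y).1 hy
          by_contra hyB
          exact hno u ⟨huB, huA⟩ y ⟨(hcovU y (h2 y hy)).resolve_right hyB, hyB⟩ hy
        · have : {x | G' u x} = {x | G u x} := by
            ext y; exact hG'B u huB huA y
          rw [this]; exact h3
    obtain ⟨w, β, ρ, hwB, hwS, hβB, hwβ, hρβ, hβd, hβr, hwarc, hHarc⟩ := hM
    have hwA : w ∉ A := fun h => hwS ⟨h, hwB⟩
    have hQβ : ∀ v, ∀ z ∈ β v, Q z ⊆ ⋃ z ∈ β v, Q z := fun v z hz =>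
      Set.subset_biUnion_of_mem (u := fun z => Q z) hz
    refine ⟨w, fun v => ⋃ z ∈ β v, Q z, fun v => e (ρ v), hBU hwB, fun h => hwA (hSA h),
      ?_, ?_, ?_, ?_, ?_, ?_, ?_⟩
    · intro v
      exact Set.iUnion₂_subset fun z hz => hQU z (hβB v hz)
    · intro v h
      simp only [Set.mem_iUnion] at h
      obtain ⟨z, hz, h⟩ := h
      have : w = z := hQd w hwB z (hβB v hz) w (hzQ w).1 h
      exact hwβ v (this ▸ hz)
    · exact fun v => hQβ v _ (hρβ v) (hzQ _).2.1
    · intro u v y hu hv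
      simp only [Set.mem_iUnion] at hu hv
      obtain ⟨z, hz, h⟩ := hu
      obtain ⟨z', hz', h'⟩ := hv
      have := hQd z (hβB u hz) z' (hβB v hz') y h h'
      subst this
      exact hβd u v z hz hz'
    · intro v y hy
      simp only [Set.mem_iUnion] at hy
      obtain ⟨z, hz, hy⟩ := hy
      have hin : ∀ z ∈ β v, ∀ y ∈ Q z,
          Relation.ReflTransGen (Rin G (⋃ z ∈ β v, Q z)) y (e z) := fun z hz y hy =>
        Rin.mono (fun u v h => h) (hQβ v z hz) ((hzQ z).2.2 y hy)
      refine (hin z hz y hy).trans ?_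
      have key : ∀ {c d}, Relation.ReflTransGen (Rin G' (β v)) c d →
          Relation.ReflTransGen (Rin G (⋃ z ∈ β v, Q z)) (e c) (e d) := by
        intro c d h
        induction h with
        | refl => exact .refl
        | tail _ hst ih2 =>
          rename_i c' d' _
          refine ih2.trans ?_
          obtain ⟨hg, hc, hd⟩ := hst
          rcases hg with ⟨h1, h2, h3⟩ | ⟨h1, h2, h3⟩
          · have : e c' = c' := (hQ2 c' fun h => h2 h.1).2
            rw [this]
            exact Relation.ReflTransGen.head
              ⟨h3, hQβ v _ hc (hzQ _).1, hQβ v _ hd (hzQ _).1⟩ (hin d' hd d' (hzQ _).1)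
          · exact Relation.ReflTransGen.single
              ⟨h3, hQβ v _ hc (hzQ _).2.1, hQβ v _ hd (hzQ _).2.1⟩
      exact key (hβr v z hz)
    · intro v
      obtain ⟨z, hz, h⟩ := hwarc v
      exact ⟨z, hQβ v z hz (hzQ z).1, (hG'B w hwB hwA z).1 h⟩
    · intro u v huv
      obtain ⟨z, hz, h⟩ := hHarc u v huv
      rcases h with ⟨h1, h2, h3⟩ | ⟨h1, h2, h3⟩
      · refine ⟨z, hQβ v z hz (hzQ z).1, ?_⟩
        have : e (ρ u) = ρ u := (hQ2 _ fun h => h2 h.1).2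
        show G (e (ρ u)) z
        rw [this]; exact h3
      · exact ⟨e z, hQβ v z hz (hzQ z).2.1, h3⟩

end Aux

section Butterfly

theorem bs_delArcs {W : Type*} [Finite W] : ∀ (n : ℕ) (σ : DState W)
    (A' : Set W → Set W → Prop), (∀ X Y, A' X Y → σ.A X Y) →
    {p : Set W × Set W | σ.A p.1 p.2 ∧ ¬ A' p.1 p.2}.ncard ≤ n →
    Relation.ReflTransGen BStep σ ⟨σ.P, A'⟩ := by
  intro n
  induction n with
  | zero =>
    intro σ A' h hn
    have h0 : {p : Set W × Set W | σ.A p.1 p.2 ∧ ¬ A' p.1 p.2} = ∅ := by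
      rwa [Nat.le_zero, Set.ncard_eq_zero (Set.toFinite _)] at hn
    have : A' = σ.A := by
      funext X Y
      apply propext
      refine ⟨h X Y, fun hXY => ?_⟩
      by_contra hcon
      have : (X, Y) ∈ {p : Set W × Set W | σ.A p.1 p.2 ∧ ¬ A' p.1 p.2} := ⟨hXY, hcon⟩
      rw [h0] at this
      exact this
    subst this
    exact .refl
  | succ n ih =>
    intro σ A' h hn
    by_cases hex : ∃ X Y, σ.A X Y ∧ ¬ A' X Y
    · obtain ⟨X, Y, hXY, hXY'⟩ := hex
      refine Relation.ReflTransGen.head (BStep.delArc σ X Y hXY) ?_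
      refine ih ⟨σ.P, fun Z Z' => σ.A Z Z' ∧ ¬ (Z = X ∧ Z' = Y)⟩ A' ?_ ?_
      · intro Z Z' hZ
        refine ⟨h _ _ hZ, ?_⟩
        rintro ⟨rfl, rfl⟩
        exact hXY' hZ
      · have hss : {p : Set W × Set W | (σ.A p.1 p.2 ∧ ¬ (p.1 = X ∧ p.2 = Y)) ∧ ¬ A' p.1 p.2} ⊂
            {p : Set W × Set W | σ.A p.1 p.2 ∧ ¬ A' p.1 p.2} := by
          refine ⟨fun p hp => ⟨hp.1.1, hp.2⟩, fun hh => ?_⟩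
          have := @hh (X, Y) ⟨hXY, hXY'⟩
          exact this.1.2 ⟨rfl, rfl⟩
        have := Set.ncard_lt_ncard hss (Set.toFinite _)
        show Set.ncard {p : Set W × Set W |
          (σ.A p.1 p.2 ∧ ¬ (p.1 = X ∧ p.2 = Y)) ∧ ¬ A' p.1 p.2} ≤ n
        omega
    · push Not at hex
      apply ih σ A' h
      have : {p : Set W × Set W | σ.A p.1 p.2 ∧ ¬ A' p.1 p.2} = ∅ := by
        ext p
        exact ⟨fun hp => hp.2 (hex _ _ hp.1), fun hp => absurd hp (Set.notMem_empty _)⟩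
      rw [this]; simp

theorem bs_delVerts {W : Type*} [Finite W] : ∀ (n : ℕ) (σ : DState W) (K : Set (Set W)),
    K ⊆ σ.P → (∀ X Y, σ.A X Y → X ∈ K ∧ Y ∈ K) → (σ.P \ K).ncard ≤ n →
    Relation.ReflTransGen BStep σ ⟨K, σ.A⟩ := by
  intro n
  induction n with
  | zero =>
    intro σ K h hA hn
    have h0 : σ.P \ K = ∅ := by
      rwa [Nat.le_zero, Set.ncard_eq_zero (Set.toFinite _)] at hn
    have : K = σ.P := h.antisymm (Set.sdiff_eq_empty.1 h0)
    subst this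
    exact .refl
  | succ n ih =>
    intro σ K h hA hn
    by_cases hex : ∃ X ∈ σ.P, X ∉ K
    · obtain ⟨X, hX, hXK⟩ := hex
      have e1 : (⟨σ.P \ {X}, fun Z Y => σ.A Z Y ∧ Z ≠ X ∧ Y ≠ X⟩ : DState W) =
          ⟨σ.P \ {X}, σ.A⟩ := by
        congr 1
        funext Z Y
        apply propext
        refine ⟨fun h => h.1, fun hZ => ⟨hZ, ?_, ?_⟩⟩
        · rintro rfl; exact hXK (hA _ _ hZ).1
        · rintro rfl; exact hXK (hA _ _ hZ).2
      have st := BStep.delVertex σ X hX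
      rw [e1] at st
      refine Relation.ReflTransGen.head st ?_
      refine ih ⟨σ.P \ {X}, σ.A⟩ K ?_ hA ?_
      · exact fun Z hZ => ⟨h hZ, fun hh => hXK (hh ▸ hZ)⟩
      · have hss : (σ.P \ {X}) \ K ⊂ σ.P \ K := by
          refine ⟨fun p hp => ⟨hp.1.1, hp.2⟩, fun hh => ?_⟩
          exact (@hh X ⟨hX, hXK⟩).1.2 rfl
        have := Set.ncard_lt_ncard hss (Set.toFinite _)
        show ((σ.P \ {X}) \ K).ncard ≤ n
        omega
    · push Not at hex
      apply ih σ K h hA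
      rw [Set.sdiff_eq_empty.2 hex]; simp

/-- The quotient state given by a labelling `π` of the vertices of `K` by branch sets. -/
def qState {W : Type*} (K : Set W) (F : W → W → Prop) (π : W → Set W) : DState W :=
  ⟨π '' K, fun X Y => X ≠ Y ∧ ∃ a b, F a b ∧ π a = X ∧ π b = Y⟩

theorem qstep {W : Type*} (K : Set W) (F : W → W → Prop) (π π' : W → Set W) (B C : Set W)
    (hF : ∀ a b, F a b → a ∈ K ∧ b ∈ K) (hne : B ≠ C)
    (hBC : ∃ a b, F a b ∧ π a = B ∧ π b = C)
    (hout : ∀ a b, F a b → π a = B → π b = C)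
    (hnew : ∀ a ∈ K, π a ≠ B ∪ C)
    (h1 : ∀ a ∈ K, π a = B ∨ π a = C → π' a = B ∪ C)
    (h2 : ∀ a ∈ K, π a ≠ B → π a ≠ C → π' a = π a) :
    BStep (qState K F π) (qState K F π') := by
  obtain ⟨a0, b0, hab0, ha0, hb0⟩ := hBC
  obtain ⟨ha0K, hb0K⟩ := hF _ _ hab0
  have st := BStep.contract (qState K F π) B C ⟨a0, ha0K, ha0⟩ ⟨b0, hb0K, hb0⟩
    ⟨hne, a0, b0, hab0, ha0, hb0⟩ hne (Or.inl (by
      rintro D ⟨_, a, b, hab, ha, hb⟩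
      rw [← hb]; exact hout a b hab ha))
  have hBn : B ≠ B ∪ C := ha0 ▸ hnew a0 ha0K
  have hCn : C ≠ B ∪ C := by
    have := hnew b0 hb0K
    rwa [hb0] at this
  have hdich : ∀ a ∈ K, ((π a = B ∨ π a = C) ∧ π' a = B ∪ C) ∨
      (π a ≠ B ∧ π a ≠ C ∧ π' a = π a ∧ π a ≠ B ∪ C) := by
    intro a ha
    by_cases h : π a = B ∨ π a = C
    · exact Or.inl ⟨h, h1 a ha h⟩
    · push Not at h
      exact Or.inr ⟨h.1, h.2, h2 a ha h.1 h.2, hnew a ha⟩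
  convert st using 1
  unfold qState
  congr 1
  · ext X
    constructor
    · rintro ⟨a, ha, rfl⟩
      rcases hdich a ha with ⟨-, h⟩ | ⟨h, h', h'', -⟩
      · exact Or.inl h
      · rw [h'']
        exact Or.inr ⟨⟨a, ha, rfl⟩, by simp [h, h']⟩
    · rintro (rfl | ⟨⟨a, ha, rfl⟩, h⟩)
      · exact ⟨a0, ha0K, h1 a0 ha0K (Or.inl ha0)⟩
      · simp only [Set.mem_insert_iff, Set.mem_singleton_iff, not_or] at h
        exact ⟨a, ha, h2 a ha h.1 h.2⟩
  · funext X Y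
    apply propext
    constructor
    · rintro ⟨hXY, a, b, hab, rfl, rfl⟩
      obtain ⟨haK, hbK⟩ := hF _ _ hab
      rcases hdich a haK with ⟨ha, ha'⟩ | ⟨ha1, ha2, ha3, ha4⟩
      · rcases hdich b hbK with ⟨hb, hb'⟩ | ⟨hb1, hb2, hb3, hb4⟩
        · exact absurd (ha'.trans hb'.symm) hXY
        · refine Or.inr (Or.inl ?_)
          rw [ha', hb3]
          refine ⟨rfl, hb1, hb2, hb4, ?_⟩
          rcases ha with ha | ha
          · exact Or.inl ⟨hb1.symm, a, b, hab, ha, rfl⟩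
          · exact Or.inr ⟨hb2.symm, a, b, hab, ha, rfl⟩
      · rcases hdich b hbK with ⟨hb, hb'⟩ | ⟨hb1, hb2, hb3, hb4⟩
        · refine Or.inr (Or.inr ?_)
          rw [hb', ha3]
          refine ⟨rfl, ha1, ha2, ha4, ?_⟩
          rcases hb with hb | hb
          · exact Or.inl ⟨ha1, a, b, hab, rfl, hb⟩
          · exact Or.inr ⟨ha2, a, b, hab, rfl, hb⟩
        · refine Or.inl ?_
          rw [ha3, hb3] at hXY ⊢
          exact ⟨⟨hXY, a, b, hab, rfl, rfl⟩, ha1, ha2, hb1, hb2⟩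
    · rintro (⟨⟨hXY, a, b, hab, rfl, rfl⟩, ha1, ha2, hb1, hb2⟩ |
        ⟨rfl, hY1, hY2, hY3, h⟩ | ⟨rfl, hX1, hX2, hX3, h⟩)
      · obtain ⟨haK, hbK⟩ := hF _ _ hab
        exact ⟨hXY, a, b, hab, h2 a haK ha1 ha2, h2 b hbK hb1 hb2⟩
      · refine ⟨hY3.symm, ?_⟩
        rcases h with ⟨-, a, b, hab, ha, rfl⟩ | ⟨-, a, b, hab, ha, rfl⟩
        · exact ⟨a, b, hab, h1 a (hF _ _ hab).1 (Or.inl ha), h2 b (hF _ _ hab).2 hY1 hY2⟩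
        · exact ⟨a, b, hab, h1 a (hF _ _ hab).1 (Or.inr ha), h2 b (hF _ _ hab).2 hY1 hY2⟩
      · refine ⟨hX3, ?_⟩
        rcases h with ⟨-, a, b, hab, rfl, hb⟩ | ⟨-, a, b, hab, rfl, hb⟩
        · exact ⟨a, b, hab, h2 a (hF _ _ hab).1 hX1 hX2, h1 b (hF _ _ hab).2 (Or.inl hb)⟩
        · exact ⟨a, b, hab, h2 a (hF _ _ hab).1 hX1 hX2, h1 b (hF _ _ hab).2 (Or.inr hb)⟩

theorem qstart {W : Type*} [Finite W] (G : W → W → Prop) (K : Set W) (F : W → W → Prop)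
    (hF : ∀ a b, F a b → a ∈ K ∧ b ∈ K) (hFG : ∀ a b, F a b → G a b) (hirr : ∀ a, ¬ F a a) :
    Relation.ReflTransGen BStep (initState G) (qState K F fun z => {z}) := by
  have s1 := bs_delArcs _ (initState G)
    (fun X Y => X ≠ Y ∧ ∃ a b, F a b ∧ ({a} : Set W) = X ∧ ({b} : Set W) = Y) (by
      rintro _ _ ⟨-, a, b, hab, rfl, rfl⟩
      exact ⟨a, b, hFG _ _ hab, rfl, rfl⟩) le_rfl
  refine s1.trans ?_
  refine bs_delVerts _ ⟨(initState G).P, _⟩ ((fun z => ({z} : Set W)) '' K) ?_ ?_ le_rfl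
  · rintro _ ⟨z, -, rfl⟩
    exact ⟨z, rfl⟩
  · rintro _ _ ⟨-, a, b, hab, rfl, rfl⟩
    exact ⟨⟨a, (hF _ _ hab).1, rfl⟩, ⟨b, (hF _ _ hab).2, rfl⟩⟩

/-- A next-vertex function decreasing a distance to the root. -/
theorem exists_next {W : Type*} (R : W → W → Prop) (ρ : W) :
    ∃ (f : W → W) (d : W → ℕ), ∀ x, Relation.ReflTransGen R x ρ → x ≠ ρ →
      R x (f x) ∧ d (f x) < d x := by
  classical
  have hn : ∃ N : ℕ → W → Prop, (∀ x, N 0 x ↔ x = ρ) ∧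
      ∀ n x, N (n + 1) x ↔ ∃ y, R x y ∧ N n y :=
    ⟨fun n => Nat.rec (fun x => x = ρ) (fun _ p x => ∃ y, R x y ∧ p y) n,
      fun _ => Iff.rfl, fun _ _ => Iff.rfl⟩
  obtain ⟨N, hN0, hN1⟩ := hn
  have hreach : ∀ x, Relation.ReflTransGen R x ρ → ∃ n, N n x := by
    intro x hx
    induction hx using Relation.ReflTransGen.head_induction_on with
    | refl => exact ⟨0, (hN0 _).2 rfl⟩
    | head h _ ih =>
      obtain ⟨n, hn⟩ := ih
      exact ⟨n + 1, (hN1 _ _).2 ⟨_, h, hn⟩⟩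
  have key : ∀ x, ∃ y, Relation.ReflTransGen R x ρ → x ≠ ρ →
      R x y ∧ sInf {n | N n y} < sInf {n | N n x} := by
    intro x
    by_cases hx : Relation.ReflTransGen R x ρ
    swap
    · exact ⟨x, fun h => absurd h hx⟩
    have hmem : N (sInf {n | N n x}) x := Nat.sInf_mem (s := {n | N n x}) (hreach x hx)
    rcases hk : sInf {n | N n x} with _ | k
    · rw [hk] at hmem
      exact ⟨x, fun _ h => absurd ((hN0 x).1 hmem) h⟩
    · rw [hk] at hmem
      obtain ⟨y, hxy, hy⟩ := (hN1 _ _).1 hmem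
      refine ⟨y, fun _ _ => ⟨hxy, ?_⟩⟩
      have : sInf {n | N n y} ≤ k := Nat.sInf_le hy
      omega
  choose f hf using key
  exact ⟨f, fun x => sInf {n | N n x}, hf⟩

theorem model_minor {V W : Type*} [Finite V] [Finite W] (G : W → W → Prop) (H : V → V → Prop)
    (hirr : ∀ v, ¬ H v v) (huniq : ∀ v a b, H v a → H v b → a = b)
    (U S : Set W) (hM : Model G H U S) :
    ∃ β : Option V → Set W, IsButterflyMinorWith G (diApex H) β ∧ ∃ w : W, β none = {w} := by
  classical
  obtain ⟨w, β, ρ, -, -, -, hwβ, hρβ, hβd, hβr, hwarc, hHarc⟩ := hM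
  have hfd : ∀ v, ∃ (f : W → W) (d : W → ℕ), ∀ x ∈ β v, x ≠ ρ v →
      G x (f x) ∧ f x ∈ β v ∧ d (f x) < d x := by
    intro v
    obtain ⟨f, d, h⟩ := exists_next (Rin G (β v)) (ρ v)
    refine ⟨f, d, fun x hx hne => ?_⟩
    obtain ⟨h1, h2⟩ := h x (hβr v x hx) hne
    exact ⟨h1.1, h1.2.2, h2⟩
  choose f d hf using hfd
  choose g hgβ hg using hwarc
  choose h hhβ hh using hHarc
  let K : Set W := insert w (⋃ v, β v)
  have hβK : ∀ v, ∀ z ∈ β v, z ∈ K := fun v z hz => Or.inr (Set.mem_iUnion.2 ⟨v, hz⟩)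
  let F : W → W → Prop := fun a b => (a = w ∧ ∃ v, b = g v) ∨
    (∃ v, a ∈ β v ∧ a ≠ ρ v ∧ b = f v a) ∨ (∃ u v, ∃ huv : H u v, a = ρ u ∧ b = h u v huv)
  have hFK : ∀ a b, F a b → a ∈ K ∧ b ∈ K := by
    rintro a b (⟨rfl, v, rfl⟩ | ⟨v, ha, hne, rfl⟩ | ⟨u, v, huv, rfl, rfl⟩)
    · exact ⟨Or.inl rfl, hβK v _ (hgβ v)⟩
    · exact ⟨hβK v _ ha, hβK v _ (hf v a ha hne).2.1⟩
    · exact ⟨hβK u _ (hρβ u), hβK v _ (hhβ u v huv)⟩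
  have hFG : ∀ a b, F a b → G a b := by
    rintro a b (⟨rfl, v, rfl⟩ | ⟨v, ha, hne, rfl⟩ | ⟨u, v, huv, rfl, rfl⟩)
    · exact hg v
    · exact (hf v a ha hne).1
    · exact hh u v huv
  have hFirr : ∀ a, ¬ F a a := by
    rintro a (⟨rfl, v, hv⟩ | ⟨v, ha, hne, hv⟩ | ⟨u, v, huv, rfl, hv⟩)
    · exact hwβ v (hv ▸ hgβ v)
    · have := (hf v a ha hne).2.2
      rw [← hv] at this
      exact lt_irrefl _ this
    · have h1 := hhβ u v huv
      rw [← hv] at h1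
      have := hβd _ _ _ (hρβ u) h1
      subst this
      exact hirr _ huv
  have hFw : ∀ a, ¬ F a w := by
    rintro a (⟨rfl, v, hv⟩ | ⟨v, ha, hne, hv⟩ | ⟨u, v, huv, rfl, hv⟩)
    · exact hwβ v (hv ▸ hgβ v)
    · exact hwβ v (hv ▸ (hf v a ha hne).2.1)
    · exact hwβ v (hv ▸ hhβ u v huv)
  -- the labelling for a set `D` of processed vertices
  let π : Set W → W → Set W := fun D x =>
    {z | z = x ∨ (x ∈ D ∧ z ∈ D ∧ ∃ v, x ∈ β v ∧ z ∈ β v)}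
  have hπin : ∀ D v, ∀ x ∈ β v, x ∈ D → π D x = D ∩ β v := by
    intro D v x hx hxD
    ext z
    constructor
    · rintro (rfl | ⟨-, hz, u, hu1, hu2⟩)
      · exact ⟨hxD, hx⟩
      · rw [hβd _ _ _ hx hu1]; exact ⟨hz, hu2⟩
    · rintro ⟨h1, h2⟩
      exact Or.inr ⟨hxD, h1, v, hx, h2⟩
  have hπout : ∀ D x, x ∉ D → π D x = {x} := by
    intro D x hx
    ext z
    constructor
    · rintro (rfl | ⟨hz, -⟩)
      · rfl
      · exact absurd hz hx
    · rintro rfl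
      exact Or.inl rfl
  have hπself : ∀ D x, x ∈ π D x := fun D x => Or.inl rfl
  -- contract everything
  have hall : ∀ (n : ℕ) (D : Set W), (∀ v, ρ v ∈ D) → D ⊆ ⋃ v, β v →
      ((⋃ v, β v) \ D).ncard ≤ n →
      Relation.ReflTransGen BStep (qState K F (π D)) (qState K F (π (⋃ v, β v))) := by
    intro n
    induction n with
    | zero =>
      intro D _ hD hn
      have h0 : (⋃ v, β v) \ D = ∅ := by
        rwa [Nat.le_zero, Set.ncard_eq_zero (Set.toFinite _)] at hn
      rw [hD.antisymm (Set.sdiff_eq_empty.1 h0)]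
    | succ n ih =>
      intro D hρD hD hn
      by_cases hex : ∃ x v, x ∈ β v ∧ x ∉ D ∧ f v x ∈ D
      · obtain ⟨x, v, hxv, hxD, hfx⟩ := hex
        have hxρ : x ≠ ρ v := fun hh => hxD (hh ▸ hρD v)
        have hstep : BStep (qState K F (π D)) (qState K F (π (insert x D))) := by
          have hfβ := (hf v x hxv hxρ).2.1
          have hxx : π D x = {x} := hπout D x hxD
          have hff : π D (f v x) = D ∩ β v := hπin D v _ hfβ hfx
          have hun : {x} ∪ D ∩ β v = insert x D ∩ β v := by
            ext z
            constructor
            · rintro (rfl | hz)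
              · exact ⟨Or.inl rfl, hxv⟩
              · exact ⟨Or.inr hz.1, hz.2⟩
            · rintro ⟨rfl | hz, hz'⟩
              · exact Or.inl rfl
              · exact Or.inr ⟨hz, hz'⟩
          have hcls : ∀ a, π D a = {x} → a = x := fun a ha => by
            have := hπself D a
            rw [ha] at this; exact this
          have hcls2 : ∀ a, π D a = D ∩ β v → a ∈ D ∧ a ∈ β v := fun a ha => by
            have := hπself D a
            rw [ha] at this; exact this
          refine qstep K F _ _ {x} (D ∩ β v) hFK ?_ ?_ ?_ ?_ ?_ ?_
          · intro hh
            have : x ∈ D ∩ β v := hh ▸ rfl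
            exact hxD this.1
          · exact ⟨x, f v x, Or.inr (Or.inl ⟨v, hxv, hxρ, rfl⟩), hxx, hff⟩
          · intro a b hab ha
            have := hcls a ha
            subst this
            rcases hab with ⟨rfl, u, rfl⟩ | ⟨u, ha, hne, rfl⟩ | ⟨u, u', huv, rfl, rfl⟩
            · exact absurd hxv (hwβ v)
            · have := hβd _ _ _ hxv ha
              subst this
              exact hff
            · exact absurd (hρD u) hxD
          · intro a _ ha
            have hxa : x ∈ π D a := ha ▸ Or.inl rfl
            rcases hxa with rfl | ⟨_, hh, _⟩
            · rw [hxx] at ha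
              have h3 : f v x ∈ ({x} : Set W) := by
                rw [ha]; exact Or.inr ⟨hfx, hfβ⟩
              have h3 : f v x = x := h3
              exact hxD (h3 ▸ hfx)
            · exact hxD hh
          · rintro a _ (ha | ha)
            · have := hcls a ha
              subst this
              rw [hun]
              exact hπin _ v _ hxv (Or.inl rfl)
            · rw [hun]
              exact hπin _ v _ (hcls2 a ha).2 (Or.inr (hcls2 a ha).1)
          · intro a _ ha1 ha2
            have hax : a ≠ x := fun hh => ha1 (hh ▸ hxx)
            by_cases haD : a ∈ D
            · obtain ⟨u, hu⟩ := Set.mem_iUnion.1 (hD haD)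
              rw [hπin _ u a hu (Or.inr haD), hπin _ u a hu haD]
              have hne : u ≠ v := by
                rintro rfl
                exact ha2 (hπin _ u a hu haD)
              ext z
              constructor
              · rintro ⟨rfl | hz, hz'⟩
                · exact absurd (hβd _ _ _ hz' hxv) hne
                · exact ⟨hz, hz'⟩
              · exact fun hz => ⟨Or.inr hz.1, hz.2⟩
            · rw [hπout _ a haD, hπout _ a]
              rintro (hh | hh)
              · exact hax hh
              · exact haD hh
        refine Relation.ReflTransGen.head hstep (ih (insert x D) (fun v => Or.inr (hρD v)) ?_ ?_)
        · exact Set.insert_subset (Set.mem_iUnion.2 ⟨v, hxv⟩) hD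
        · have hss : (⋃ v, β v) \ insert x D ⊂ (⋃ v, β v) \ D := by
            refine ⟨fun p hp => ⟨hp.1, fun hh => hp.2 (Or.inr hh)⟩, fun hh => ?_⟩
            exact (@hh x ⟨Set.mem_iUnion.2 ⟨v, hxv⟩, hxD⟩).2 (Or.inl rfl)
          have := Set.ncard_lt_ncard hss (Set.toFinite _)
          omega
      · push Not at hex
        apply ih D hρD hD
        have hsub : (⋃ v, β v) ⊆ D := by
          intro x hx
          obtain ⟨v, hxv⟩ := Set.mem_iUnion.1 hx
          have : ∀ (m : ℕ) (x : W), d v x < m → x ∈ β v → x ∈ D := by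
            intro m
            induction m with
            | zero => intro x hx; omega
            | succ m ihm =>
              intro x hxm hxv
              by_contra hxD
              have hxρ : x ≠ ρ v := fun hh => hxD (hh ▸ hρD v)
              obtain ⟨-, h2, h3⟩ := hf v x hxv hxρ
              exact hex x v hxv hxD (ihm (f v x) (by omega) h2)
          exact this _ x (Nat.lt_succ_self _) hxv
        rw [Set.sdiff_eq_empty.2 hsub]; simp
  have hst : qState K F (fun z => {z}) = qState K F (π (Set.range ρ)) := by
    congr 1
    funext x
    by_cases hx : x ∈ Set.range ρ
    · obtain ⟨v, rfl⟩ := hx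
      rw [hπin (Set.range ρ) v _ (hρβ v) ⟨v, rfl⟩]
      ext z
      constructor
      · rintro rfl
        exact ⟨⟨v, rfl⟩, hρβ v⟩
      · rintro ⟨⟨u, rfl⟩, hu⟩
        rw [hβd _ _ _ (hρβ u) hu]; rfl
    · rw [hπout _ x hx]
  have hrun : Relation.ReflTransGen BStep (initState G) (qState K F (π (⋃ v, β v))) := by
    have s1 := qstart G K F hFK hFG hFirr
    rw [hst] at s1
    refine s1.trans (hall _ _ (fun v => ⟨v, rfl⟩) ?_ le_rfl)
    rintro _ ⟨v, rfl⟩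
    exact Set.mem_iUnion.2 ⟨v, hρβ v⟩
  have hπv : ∀ v, ∀ z ∈ β v, π (⋃ v, β v) z = β v := by
    intro v z hz
    rw [hπin _ v z hz (Set.mem_iUnion.2 ⟨v, hz⟩)]
    exact Set.inter_eq_right.2 (Set.subset_iUnion β v)
  have hwU : w ∉ ⋃ v, β v := fun hh => by
    obtain ⟨v, hv⟩ := Set.mem_iUnion.1 hh
    exact hwβ v hv
  have hπw : π (⋃ v, β v) w = {w} := hπout _ w hwU
  have hβinj : Function.Injective β := fun u v huv =>
    hβd u v _ (hρβ u) (huv ▸ hρβ u)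
  have hβw : ∀ v, β v ≠ {w} := fun v hv => hwβ v (hv ▸ rfl)
  have hofw : ∀ a, π (⋃ v, β v) a = {w} → a = w := fun a ha => by
    have := hπself (⋃ v, β v) a
    rw [ha] at this; exact this
  have hofv : ∀ a v, π (⋃ v, β v) a = β v → a ∈ β v := fun a v ha => ha ▸ hπself _ a
  refine ⟨fun o => o.elim {w} β, ⟨_, hrun, ?_, ?_, ?_⟩, w, rfl⟩
  · rintro (_ | u) (_ | v) huv
    · rfl
    · exact absurd huv.symm (hβw v)
    · exact absurd huv (hβw u)
    · exact congrArg some (hβinj huv)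
  · ext X
    constructor
    · rintro ⟨a, rfl | ha, rfl⟩
      · exact ⟨none, hπw.symm⟩
      · obtain ⟨v, hv⟩ := Set.mem_iUnion.1 ha
        exact ⟨some v, (hπv v a hv).symm⟩
    · rintro ⟨_ | v, rfl⟩
      · exact ⟨w, Or.inl rfl, hπw⟩
      · exact ⟨ρ v, hβK v _ (hρβ v), hπv v _ (hρβ v)⟩
  · rintro (_ | u) (_ | v)
    · constructor
      · rintro (⟨-, v, hv⟩ | ⟨u, v, hu, -⟩)
        · exact absurd hv (by simp)
        · exact absurd hu (by simp)
      · rintro ⟨hne, -⟩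
        exact absurd rfl hne
    · constructor
      · intro _
        exact ⟨(hβw v).symm, w, g v, Or.inl ⟨rfl, v, rfl⟩, hπw, hπv v _ (hgβ v)⟩
      · exact fun _ => Or.inl ⟨rfl, v, rfl⟩
    · constructor
      · rintro (⟨hu, -⟩ | ⟨u, v, -, hv, -⟩)
        · exact absurd hu (by simp)
        · exact absurd hv (by simp)
      · rintro ⟨-, a, b, hab, -, hb⟩
        rw [hofw b hb] at hab
        exact absurd hab (hFw a)
    · constructor
      · rintro (⟨hu, -⟩ | ⟨u', v', hu, hv, huv⟩)
        · exact absurd hu (by simp)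
        · obtain rfl := Option.some.inj hu
          obtain rfl := Option.some.inj hv
          refine ⟨fun hh => hirr u ?_, ρ u, h u v huv, Or.inr (Or.inr ⟨u, v, huv, rfl, rfl⟩),
            hπv u _ (hρβ u), hπv v _ (hhβ u v huv)⟩
          have := hβinj hh
          subst this
          exact huv
      · rintro ⟨hne, a, b, hab, ha, hb⟩
        replace ha := hofv a u ha
        replace hb := hofv b v hb
        refine Or.inr ⟨u, v, rfl, rfl, ?_⟩
        rcases hab with ⟨rfl, -⟩ | ⟨u', ha', hne', rfl⟩ | ⟨u', v', huv, rfl, rfl⟩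
        · exact absurd ha (hwβ u)
        · have h1 := hβd _ _ _ ha ha'
          have h2 := hβd _ _ _ hb (hf u' a ha' hne').2.1
          exact absurd (congrArg β (h1.trans h2.symm)) hne
        · have h1 := hβd _ _ _ ha (hρβ u')
          have h2 := hβd _ _ _ hb (hhβ u' v' huv)
          rw [h1, h2]; exact huv

/-- In a weakly connected subdigraph of an in-arborescence containing the root, every vertex
has a directed path to the root. -/
theorem reach_root {V : Type*} (H E : V → V → Prop) (r : V) (T : Set V)
    (huniq : ∀ v a b, H v a → H v b → a = b) (hr : ∀ v, ¬ H r v)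
    (hE : ∀ a b, E a b → H a b) (hrT : r ∈ T)
    (hc : ((SimpleGraph.fromRel E).induce T).Connected) (a : V) (ha : a ∈ T) :
    Relation.ReflTransGen E a r := by
  have hp := hc.preconnected ⟨r, hrT⟩ ⟨a, ha⟩
  rw [SimpleGraph.reachable_iff_reflTransGen] at hp
  have key : ∀ x y : T, Relation.ReflTransGen ((SimpleGraph.fromRel E).induce T).Adj x y →
      Relation.ReflTransGen E x r → Relation.ReflTransGen E y r := by
    intro x y hxy hx
    induction hxy with
    | refl => exact hx
    | tail _ hst ih =>
      rename_i c c' _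
      have hadj : (SimpleGraph.fromRel E).Adj c c' := hst
      rw [SimpleGraph.fromRel_adj] at hadj
      rcases hadj.2 with h | h
      · rcases ih.cases_head with h1 | ⟨c'', h1, h2⟩
        · rw [h1] at h
          exact absurd (hE _ _ h) (hr _)
        · rwa [huniq _ _ _ (hE _ _ h) (hE _ _ h1)]
      · exact Relation.ReflTransGen.head h ih
  exact key _ _ hp .refl

end Butterfly

/-- Lemma: let `H` be an in-arborescence on `t ≥ 1` vertices with root `r`, and let `S` be
well-in-connected in a digraph `G` such that `G[S]` is isomorphic to a weakly connected
subdigraph of `H` containing `r`. If every vertex outside `S` has out-degree at least `t`,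
then `G` contains `H⁺` as a butterfly minor whose apex-source branch set is a singleton. -/
theorem wellInConnected_apex_butterfly_minor
    {V W : Type*} [Fintype V] [Fintype W] (hV : 0 < Fintype.card V)
    (H : V → V → Prop) (r : V) (hH : IsInArborescence H r)
    (G : W → W → Prop) (hG : Irreflexive G)
    (S : Set W) (hwic : WellInConnected G S)
    (hiso : ∃ (T : Set V) (E : V → V → Prop),
      (∀ a b : V, E a b → H a b ∧ a ∈ T ∧ b ∈ T) ∧ r ∈ T ∧
      ((SimpleGraph.fromRel E).induce T).Connected ∧
      ∃ φ : ↥S ≃ ↥T, ∀ x y : ↥S, G (x : W) (y : W) ↔ E ((φ x : ↥T) : V) ((φ y : ↥T) : V))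
    (hdeg : ∀ w ∉ S, Fintype.card V ≤ outDeg G w) :
    ∃ β : Option V → Set W, IsButterflyMinorWith G (diApex H) β ∧ ∃ w : W, β none = {w} := by
  classical
  obtain ⟨hHirr, hHtree, hHr, hHpar⟩ := hH
  obtain ⟨T, E, hE, hrT, hEc, φ, hφ⟩ := hiso
  have huniq : ∀ v a b, H v a → H v b → a = b := by
    intro v a b ha hb
    have hv : v ≠ r := fun h => hHr a (h ▸ ha)
    exact (hHpar v hv).unique ha hb
  have hirr : ∀ v, ¬ H v v := fun v => hHirr v
  have hGirr : ∀ v, ¬ G v v := fun v => hG v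
  have hHreach : ∀ v, Relation.ReflTransGen H v r := by
    intro v
    have hp := hHtree.1.preconnected r v
    refine reach_root H H r Set.univ huniq hHr (fun _ _ h => h) trivial ?_ v trivial
    exact (SimpleGraph.induceUnivIso _).connected_iff.2 hHtree.1
  have hpar : ∀ T : Set V, r ∈ T → T ≠ Set.univ → ∃ v, v ∉ T ∧ ∃ p ∈ T, H v p := by
    intro T hrT hT
    obtain ⟨v, hv⟩ := (Set.ne_univ_iff_exists_notMem T).1 hT
    by_contra hcon
    push Not at hcon
    have : ∀ x, Relation.ReflTransGen H v x → x ∉ T := by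
      intro x hx
      induction hx with
      | refl => exact hv
      | tail _ h ih => exact fun hx => hcon _ ih _ hx h
    exact this r (hHreach v) hrT
  have hEH : ∀ a ∈ T, ∀ b, H a b → E a b := by
    intro a ha b hab
    rcases (reach_root H E r T huniq hHr (fun a b h => (hE a b h).1) hrT hEc a ha).cases_head
      with h | ⟨c, hc, -⟩
    · exact absurd (h ▸ hab) (hHr b)
    · rwa [huniq a b c hab (hE _ _ hc).1]
  let τ : V → W := fun v => if hv : v ∈ T then (φ.symm ⟨v, hv⟩ : W) else (φ.symm ⟨r, hrT⟩ : W)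
  have hτ : ∀ v (hv : v ∈ T), τ v = φ.symm ⟨v, hv⟩ := fun v hv => dif_pos hv
  refine model_minor G H hirr huniq Set.univ S
    (main_ind H r hpar huniq _ G Set.univ S T τ (Nat.lt_succ_self _) hrT
      (fun a ha b hab => (hE _ _ (hEH a ha b hab)).2.2) ?_ ?_ ?_ (Set.subset_univ _) ?_ ?_ ?_)
  · intro a ha b hb hab
    rw [hτ a ha, hτ b hb] at hab
    have := φ.symm.injective (Subtype.ext hab)
    exact congrArg Subtype.val this
  · ext z
    constructor
    · rintro ⟨a, ha, rfl⟩
      rw [hτ a ha]; exact (φ.symm _).2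
    · intro hz
      refine ⟨φ ⟨z, hz⟩, (φ ⟨z, hz⟩).2, ?_⟩
      rw [hτ _ (φ ⟨z, hz⟩).2]
      simp
  · intro a b ha hab
    have hEab := hEH a ha b hab
    have hb := (hE _ _ hEab).2.2
    rw [hτ a ha, hτ b hb, hφ]
    simpa using hEab
  · obtain ⟨z, hz⟩ := (Set.ne_univ_iff_exists_notMem S).1 hwic.1
    exact ⟨z, trivial, hz⟩
  · intro A B hAB hno hA hB hSA
    by_contra hlt
    exact hwic.2 ⟨A, B, ⟨hAB, hno⟩, hA, hB, hSA, not_le.1 hlt⟩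
  · intro u _ hu
    refine ⟨hGirr u, fun _ _ => trivial, ?_⟩
    rw [Nat.card_eq_fintype_card]
    exact hdeg u hu
end

section
/- Let t ≥ 2 be an integer. Let G⃗ be a strongly connected digraph and let S be a subset of V(G⃗) such that: every vertex in V(G⃗)∖S has out-degree at least t in G⃗; there exist a directed cycle C in G⃗[S] and |∂⁻(S)| pairwise disjoint directed paths in G⃗ from ∂⁻(S) to V(C) internally disjoint from V(C); and there exists an arc (x,y) ∈ E(G⃗) with x ∈ V(C) and y ∈ V(G⃗)∖S. Then G⃗ contains a subdivision of W⃗_t¹ or a subdivision of W⃗_{t+1}². -/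
/-- The directed cycle on `t` vertices. -/
def dirCycle (t : ℕ) : Fin t → Fin t → Prop := fun i j => (j : ℕ) = ((i : ℕ) + 1) % t

/-- `W⃗_t¹`: the digraph obtained from `C⃗_t⁺` by adding an arc from one vertex of the cycle
to the apex source. -/
def dirW1 (t : ℕ) : Option (Fin t) → Option (Fin t) → Prop := fun a b =>
  diApex (dirCycle t) a b ∨ ((∃ u : Fin t, a = some u ∧ (u : ℕ) = 0) ∧ b = none)

/-- `W⃗_t²`: the digraph obtained from `C⃗_t⁺` by reversing one arc from the apex source to
the cycle. -/
def dirW2 (t : ℕ) : Option (Fin t) → Option (Fin t) → Prop := fun a b =>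
  (∃ u v, a = some u ∧ b = some v ∧ dirCycle t u v) ∨
  (a = none ∧ ∃ v : Fin t, b = some v ∧ (v : ℕ) ≠ 0) ∨
  ((∃ u : Fin t, a = some u ∧ (u : ℕ) = 0) ∧ b = none)

/-- `∂⁻(S)`: the set of vertices of `S` having an in-neighbour outside `S`. -/
def inBoundary {W : Type*} (G : W → W → Prop) (S : Set W) : Set W :=
  {v | v ∈ S ∧ ∃ u, u ∉ S ∧ G u v}

section Helpers

variable {W : Type*}

/-- Orbits of a partial injection give disjoint paths. -/
lemma orbit_paths [Fintype W] (G : W → W → Prop) (A K : Set W) (f : W → W)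
    (hinj : Set.InjOn f Kᶜ) (hA : ∀ u, u ∉ K → f u ∉ A)
    (hf : ∀ u, u ∉ K → f u = u ∨ G u (f u)) :
    ∃ (I : W → List W) (e : W → W), ∀ a ∈ A,
      List.IsChain G (I a ++ [e a]) ∧ (I a ++ [e a]).head? = some a ∧ (I a ++ [e a]).Nodup ∧
      e a ∈ K ∧ (∀ u ∈ I a, u ∉ K) ∧
      (∀ a' ∈ A, a ≠ a' → ∀ u ∈ I a ++ [e a], u ∉ I a' ++ [e a']) ∧
      (∀ u ∈ I a ++ [e a], u ∉ K → f u ≠ u) ∧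
      (∀ D : Set W, K ⊆ D → (∀ u, u ∉ D → f u ∉ D) → ∀ u ∈ I a ++ [e a], u ∈ D) := by
  classical
  -- key injectivity
  have key : ∀ i j a b, a ∈ A → b ∈ A → (∀ m < i, f^[m] a ∉ K) → (∀ m < j, f^[m] b ∉ K) →
      f^[i] a = f^[j] b → i = j ∧ a = b := by
    intro i
    induction i with
    | zero =>
      intro j a b ha hb _ h2 he
      cases j with
      | zero => exact ⟨rfl, he⟩
      | succ j =>
        exfalso
        rw [Function.iterate_succ_apply'] at he
        exact hA _ (h2 j (by omega)) (he ▸ ha)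
    | succ i ih =>
      intro j a b ha hb h1 h2 he
      cases j with
      | zero =>
        exfalso
        rw [Function.iterate_succ_apply'] at he
        exact hA _ (h1 i (by omega)) (by rw [he]; exact hb)
      | succ j =>
        rw [Function.iterate_succ_apply', Function.iterate_succ_apply'] at he
        have := hinj (h1 i (by omega)) (h2 j (by omega)) he
        obtain ⟨h, h'⟩ := ih j a b ha hb (fun m hm => h1 m (by omega)) (fun m hm => h2 m (by omega)) this
        exact ⟨by omega, h'⟩
  have hex : ∀ a ∈ A, ∃ n, f^[n] a ∈ K := by
    intro a ha
    by_contra hcon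
    push Not at hcon
    have : Function.Injective (fun n : ℕ => f^[n] a) := by
      intro i j hij
      exact (key i j a a ha ha (fun m _ => hcon m) (fun m _ => hcon m) hij).1
    exact not_injective_infinite_finite _ this
  let n : W → ℕ := fun a => if h : ∃ n, f^[n] a ∈ K then Nat.find h else 0
  have hn1 : ∀ a ∈ A, f^[n a] a ∈ K := by
    intro a ha
    simp only [n, dif_pos (hex a ha)]
    exact Nat.find_spec (hex a ha)
  have hn2 : ∀ a ∈ A, ∀ m < n a, f^[m] a ∉ K := by
    intro a ha m hm
    simp only [n, dif_pos (hex a ha)] at hm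
    exact Nat.find_min (hex a ha) hm
  have hnf : ∀ a ∈ A, ∀ m < n a, f (f^[m] a) ≠ f^[m] a := by
    intro a ha m hm he
    rw [← Function.iterate_succ_apply' f] at he
    have := (key (m+1) m a a ha ha (fun k hk => hn2 a ha k (by omega))
      (fun k hk => hn2 a ha k (by omega)) he).1
    omega
  refine ⟨fun a => (List.range (n a)).map (fun i => f^[i] a), fun a => f^[n a] a, ?_⟩
  intro a ha
  have hl : ∀ a, (List.range (n a)).map (fun i => f^[i] a) ++ [f^[n a] a]
      = (List.range (n a + 1)).map (fun i => f^[i] a) := by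
    intro a; simp [List.range_succ]
  simp only [hl]
  refine ⟨?_, ?_, ?_, hn1 a ha, ?_, ?_, ?_, ?_⟩
  · rw [List.isChain_iff_getElem]
    intro i hi
    simp only [List.length_map, List.length_range] at hi
    simp only [List.getElem_map, List.getElem_range]
    rw [Function.iterate_succ_apply']
    rcases hf _ (hn2 a ha i (by omega)) with h | h
    · exact absurd h (hnf a ha i (by omega))
    · exact h
  · simp [List.range_succ_eq_map]
  · refine List.Nodup.map_on ?_ List.nodup_range
    intro i hi j hj hij
    simp only [List.mem_range] at hi hj
    exact (key i j a a ha ha (fun k hk => hn2 a ha k (by omega))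
      (fun k hk => hn2 a ha k (by omega)) hij).1
  · intro u hu
    simp only [List.mem_map, List.mem_range] at hu
    obtain ⟨i, hi, rfl⟩ := hu
    exact hn2 a ha i hi
  · intro b hb hab u hu hu'
    simp only [List.mem_map, List.mem_range] at hu hu'
    obtain ⟨i, hi, rfl⟩ := hu
    obtain ⟨j, hj, hij⟩ := hu'
    exact hab (key i j a b ha hb (fun k hk => hn2 a ha k (by omega))
      (fun k hk => hn2 b hb k (by omega)) hij.symm).2
  · intro u hu huK
    simp only [List.mem_map, List.mem_range] at hu
    obtain ⟨i, hi, rfl⟩ := hu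
    apply hnf a ha i
    rcases Nat.lt_succ_iff_lt_or_eq.1 hi with h | h
    · exact h
    · exact absurd (hn1 a ha) (h ▸ huK)
  · intro D hKD hD u hu
    simp only [List.mem_map, List.mem_range] at hu
    obtain ⟨i, hi, rfl⟩ := hu
    by_contra hcon
    have : ∀ k, f^[i + k] a ∉ D := by
      intro k
      induction k with
      | zero => exact hcon
      | succ k ih => rw [← add_assoc, Function.iterate_succ_apply']; exact hD _ ih
    apply this (n a - i)
    rw [Nat.add_sub_cancel' (by omega)]
    exact hKD (hn1 a ha)

/-- A list ending in `T` whose start lies in `∂⁻S`, `T ⊆ S`, meets `∂⁻T`. -/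
lemma list_meets (G : W → W → Prop) (T : Set W) : ∀ (l : List W) (v : W),
    List.IsChain G (v :: l) → (∀ lst, (v :: l).getLast? = some lst → lst ∈ T) →
    (v ∈ T → v ∈ inBoundary G T) → ∃ u ∈ v :: l, u ∈ inBoundary G T := by
  intro l
  induction l with
  | nil =>
    intro v _ h1 h2
    exact ⟨v, by simp, h2 (h1 v (by simp))⟩
  | cons w l ih =>
    intro v hc h1 h2
    by_cases hv : v ∈ T
    · exact ⟨v, by simp, h2 hv⟩
    · rw [List.isChain_cons_cons] at hc
      obtain ⟨u, hu, hu'⟩ := ih w hc.2 (fun lst hl => h1 lst (by simpa using hl))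
        (fun hw => ⟨hw, v, hv, hc.1⟩)
      exact ⟨u, List.mem_cons_of_mem _ hu, hu'⟩

lemma paths_cut [Fintype W] (G : W → W → Prop) (S K : Set W) (P : W → List W)
    (hPchain : ∀ v ∈ inBoundary G S, List.IsChain G (v :: P v))
    (hPend : ∀ v ∈ inBoundary G S, ∀ lst : W, (v :: P v).getLast? = some lst → lst ∈ K)
    (hPdisj : ∀ v ∈ inBoundary G S, ∀ v' ∈ inBoundary G S, v ≠ v' →
      ∀ x ∈ (v :: P v), x ∉ (v' :: P v'))
    (T : Set W) (hKT : K ⊆ T) (hTS : T ⊆ S) :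
    (inBoundary G S).ncard ≤ (inBoundary G T).ncard := by
  have : ∀ v ∈ inBoundary G S, ∃ u ∈ v :: P v, u ∈ inBoundary G T := by
    intro v hv
    refine list_meets G T (P v) v (hPchain v hv) (fun lst h => hKT (hPend v hv lst h)) ?_
    intro hvT
    obtain ⟨_, u, hu, huv⟩ := hv
    exact ⟨hvT, u, fun h => hu (hTS h), huv⟩
  choose! g hg1 hg2 using this
  refine Set.ncard_le_ncard_of_injOn g hg2 ?_ (Set.toFinite _)
  intro a ha b hb hab
  by_contra hne
  exact hPdisj a ha b hb hne (g a) (hg1 a ha) (hab ▸ hg1 b hb)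

lemma submod [Fintype W] (G : W → W → Prop) (S T : Set W) :
    (inBoundary G (S ∩ T)).ncard + (inBoundary G (S ∪ T)).ncard ≤
      (inBoundary G S).ncard + (inBoundary G T).ncard := by
  rw [← Set.ncard_union_add_ncard_inter _ _ (Set.toFinite _) (Set.toFinite _),
    ← Set.ncard_union_add_ncard_inter (inBoundary G S) _ (Set.toFinite _) (Set.toFinite _)]
  apply Nat.add_le_add
  · apply Set.ncard_le_ncard _ (Set.toFinite _)
    rintro w (⟨⟨h1, h2⟩, u, hu, huw⟩ | ⟨h1, u, hu, huw⟩)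
    · by_cases h : u ∈ S
      · exact Or.inr ⟨h2, u, fun h' => hu ⟨h, h'⟩, huw⟩
      · exact Or.inl ⟨h1, u, h, huw⟩
    · rcases h1 with h1 | h1
      · exact Or.inl ⟨h1, u, fun h => hu (Or.inl h), huw⟩
      · exact Or.inr ⟨h1, u, fun h => hu (Or.inr h), huw⟩
  · apply Set.ncard_le_ncard _ (Set.toFinite _)
    rintro w ⟨⟨⟨h1, h2⟩, _⟩, ⟨_, u, hu, huw⟩⟩
    exact ⟨⟨h1, u, fun h => hu (Or.inl h), huw⟩, ⟨h2, u, fun h => hu (Or.inr h), huw⟩⟩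

lemma hall_set {ι : Type*} [Fintype W] (r : ι → W → Prop)
    (h : ∀ A : Finset ι, A.card ≤ {b | ∃ a ∈ A, r a b}.ncard) :
    ∃ f : ι → W, Function.Injective f ∧ ∀ x, r x (f x) := by
  classical
  refine (Fintype.all_card_le_filter_rel_iff_exists_injective r).1 ?_
  intro A
  refine (h A).trans (le_of_eq ?_)
  rw [← Set.ncard_coe_finset]
  congr 1
  ext; simp

lemma diff_inter_card [Fintype W] (A B : Set W) :
    (A \ B).ncard + (A ∩ B).ncard = A.ncard := by
  rw [add_comm]
  exact Set.ncard_inter_add_ncard_diff_eq_ncard A B (Set.toFinite _)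

/-- From the cut condition to a partial injection. -/
lemma cut_linkage [Fintype W] (G : W → W → Prop) (S K : Set W) (hKS : K ⊆ S)
    (hcut : ∀ T, K ⊆ T → T ⊆ S → (inBoundary G S).ncard ≤ (inBoundary G T).ncard) :
    ∃ f : W → W, Set.InjOn f Kᶜ ∧ (∀ u, u ∉ K → f u ∉ inBoundary G S) ∧
      (∀ u, u ∉ K → f u = u ∨ G u (f u)) := by
  classical
  obtain ⟨g, hg, hg'⟩ := hall_set (ι := {u // u ∉ K})
    (fun u w => w ∉ inBoundary G S ∧ (w = u ∨ G u w)) (by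
      intro A
      let U : Set W := Subtype.val '' (A : Set {u // u ∉ K})
      have hUc : U.ncard = A.card := by
        rw [Set.ncard_image_of_injective _ Subtype.val_injective, Set.ncard_coe_finset]
      set N : Set W := {b | ∃ a ∈ A, b ∉ inBoundary G S ∧ (b = a.1 ∨ G a b)} with hN
      have hUK : ∀ u ∈ U, u ∉ K := by
        rintro _ ⟨u, _, rfl⟩; exact u.2
      set B := inBoundary G S with hB
      have hNU : U \ B ⊆ N := by
        rintro _ ⟨⟨u, hu, rfl⟩, hub⟩
        exact ⟨u, hu, hub, Or.inl rfl⟩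
      have h1 := hcut (S \ U) (fun k hk => ⟨hKS hk, fun hu => hUK _ hu hk⟩) Set.diff_subset
      have h2 : inBoundary G (S \ U) ⊆ (B \ U) ∪ (N \ U) := by
        rintro w ⟨⟨hwS, hwU⟩, u, hu, huw⟩
        by_cases hwB : w ∈ B
        · exact Or.inl ⟨hwB, hwU⟩
        · right
          refine ⟨?_, hwU⟩
          have huS : u ∈ S := by
            by_contra h; exact hwB ⟨hwS, u, h, huw⟩
          have huU : u ∈ U := by
            by_contra h; exact hu ⟨huS, h⟩
          obtain ⟨u', hu', rfl⟩ := huU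
          exact ⟨u', hu', hwB, Or.inr huw⟩
      have h3 := (Set.ncard_le_ncard h2 (Set.toFinite _)).trans (Set.ncard_union_le _ _)
      have h4 := diff_inter_card B U
      have h5 := diff_inter_card U B
      have h6 := diff_inter_card N U
      have h7 : (U \ B).ncard ≤ (N ∩ U).ncard :=
        Set.ncard_le_ncard (fun u hu => ⟨hNU hu, hu.1⟩) (Set.toFinite _)
      rw [Set.inter_comm U B] at h5
      omega)
  refine ⟨fun u => if h : u ∉ K then g ⟨u, h⟩ else u, ?_, ?_, ?_⟩
  · intro a ha b hb hab
    have ha' : a ∉ K := ha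
    have hb' : b ∉ K := hb
    simp only [dif_pos ha', dif_pos hb'] at hab
    exact congrArg Subtype.val (hg hab)
  · intro u hu
    simp only [dif_pos hu]
    exact (hg' ⟨u, hu⟩).1
  · intro u hu
    simp only [dif_pos hu]
    exact (hg' ⟨u, hu⟩).2

/-- Fan lemma. -/
lemma fan_lemma [Fintype W] (G : W → W → Prop) (K : Set W) (y : W) (hy : y ∉ K)
    (t : ℕ) (hcut : ∀ T, K ⊆ T → y ∉ T → t ≤ (inBoundary G T).ncard) :
    ∃ (B : Finset W) (F : W → List W), B.card = t ∧ (∀ b ∈ B, b ∈ K) ∧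
      ∀ b ∈ B, List.IsChain G (y :: (F b ++ [b])) ∧ (F b).Nodup ∧
        (∀ u ∈ F b, u ∉ K ∧ u ≠ y) ∧ ∀ b' ∈ B, b ≠ b' → ∀ u ∈ F b, u ∉ F b' := by
  classical
  obtain ⟨g, hg, hg'⟩ := hall_set (ι := {u // u ∉ K ∧ u ≠ y} ⊕ Fin t)
    (fun i w => w ≠ y ∧ Sum.elim (fun u : {u // u ∉ K ∧ u ≠ y} => w = u.1 ∨ G u w) (fun _ : Fin t => G y w) i) (by
      intro A
      by_cases hA : ∃ j, Sum.inr j ∈ A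
      swap
      · push Not at hA
        have : A.card = ((fun i : {u // u ∉ K ∧ u ≠ y} ⊕ Fin t =>
            Sum.elim (fun u => u.1) (fun _ => y) i) '' (A : Set _)).ncard := by
          rw [Set.ncard_image_of_injOn, Set.ncard_coe_finset]
          rintro (a | a) ha (b | b) hb hab
          · simp at hab; rw [Subtype.ext hab]
          · exact absurd hb (hA _)
          · exact absurd ha (hA _)
          · exact absurd ha (hA _)
        rw [this]
        apply Set.ncard_le_ncard _ (Set.toFinite _)
        rintro _ ⟨a | a, ha, rfl⟩
        · exact ⟨_, ha, a.2.2, Or.inl rfl⟩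
        · exact absurd ha (hA _)
      · obtain ⟨j, hj⟩ := hA
        set N : Set W := {b | ∃ a ∈ A, b ≠ y ∧ Sum.elim (fun u : {u // u ∉ K ∧ u ≠ y} => b = u.1 ∨ G u b) (fun _ : Fin t => G y b) a} with hN
        let U : Set W := Subtype.val '' {u : {u // u ∉ K ∧ u ≠ y} | Sum.inl u ∈ A}
        have hAc : A.card ≤ U.ncard + t := by
          rw [Set.ncard_image_of_injective _ Subtype.val_injective]
          have e1 : ({u : {u // u ∉ K ∧ u ≠ y} | Sum.inl u ∈ A}).ncard = A.toLeft.card := by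
            rw [← Set.ncard_coe_finset]; congr 1; ext; simp
          have e2 := Finset.card_toLeft_add_card_toRight (u := A)
          have e3 : A.toRight.card ≤ t := by
            simpa using Finset.card_le_univ A.toRight
          omega
        have h1 := hcut (U ∪ {y})ᶜ (by
          rintro k hk (⟨u, _, rfl⟩ | h)
          · exact u.2.1 hk
          · exact hy (h ▸ hk)) (by simp)
        have h2 : inBoundary G (U ∪ {y})ᶜ ⊆ N \ U := by
          rintro w ⟨hw, u, hu, huw⟩
          have hwy : w ≠ y := fun h => hw (Or.inr h)
          refine ⟨?_, fun h => hw (Or.inl h)⟩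
          simp only [Set.mem_compl_iff, not_not] at hu
          rcases hu with ⟨u, hu, rfl⟩ | hu
          · exact ⟨_, hu, hwy, Or.inr huw⟩
          · have hu : u = y := hu
            exact ⟨_, hj, hwy, hu ▸ huw⟩
        have h3 := Set.ncard_le_ncard h2 (Set.toFinite _)
        have h4 := Set.ncard_diff_add_ncard_of_subset (s := U) (t := N) (by
          rintro _ ⟨u, hu, rfl⟩
          exact ⟨_, hu, u.2.2, Or.inl rfl⟩) (Set.toFinite _)
        omega)
  let f : W → W := fun u => if h : u ∉ K ∧ u ≠ y then g (Sum.inl ⟨u, h⟩) else u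
  let A : Set W := Set.range (fun j => g (Sum.inr j))
  have hyA : y ∉ A := by
    rintro ⟨j, hj⟩; exact (hg' (Sum.inr j)).1 hj
  have hfy : f y = y := by simp [f]
  have hfu : ∀ u (h : u ∉ K ∧ u ≠ y), f u = g (Sum.inl ⟨u, h⟩) := fun u h => by
    simp only [f, dif_pos h]
  obtain ⟨I, e, hIe⟩ := orbit_paths G A K f (by
      intro a ha b hb hab
      have ha' : a ∉ K := ha
      have hb' : b ∉ K := hb
      by_cases h1 : a = y
      · by_cases h2 : b = y
        · rw [h1, h2]
        · exfalso
          rw [h1, hfy, hfu b ⟨hb', h2⟩] at hab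
          exact (hg' (Sum.inl ⟨b, hb', h2⟩)).1 hab.symm
      · by_cases h2 : b = y
        · exfalso
          rw [h2, hfy, hfu a ⟨ha', h1⟩] at hab
          exact (hg' (Sum.inl ⟨a, ha', h1⟩)).1 hab
        · rw [hfu a ⟨ha', h1⟩, hfu b ⟨hb', h2⟩] at hab
          have := hg hab
          simpa using this)
    (by
      intro u hu
      by_cases h1 : u = y
      · rw [h1, hfy]; exact hyA
      · rw [hfu u ⟨hu, h1⟩]
        rintro ⟨j, hj⟩
        have := hg hj
        simp at this)
    (by
      intro u hu
      by_cases h1 : u = y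
      · left; rw [h1, hfy]
      · rw [hfu u ⟨hu, h1⟩]
        exact (hg' (Sum.inl ⟨u, hu, h1⟩)).2)
  have heinj : Set.InjOn e A := by
    intro a ha b hb hab
    by_contra hne
    exact (hIe a ha).2.2.2.2.2.1 b hb hne (e a) (by simp) (by simp [hab])
  have hfin : A.Finite := Set.toFinite _
  have hchoose : ∀ b ∈ e '' A, ∃ a ∈ A, e a = b := fun b hb => hb
  choose! h hh1 hh2 using hchoose
  refine ⟨(Set.toFinite (e '' A)).toFinset, fun b => I (h b), ?_, ?_, ?_⟩
  · rw [← Set.ncard_eq_toFinset_card, Set.ncard_image_of_injOn heinj,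
      show A = (fun j => g (Sum.inr j)) '' Set.univ from Set.image_univ.symm,
      Set.ncard_image_of_injective, Set.ncard_univ, Nat.card_fin]
    intro i j hij
    have := hg hij
    simpa using this
  · intro b hb
    simp only [Set.Finite.mem_toFinset] at hb
    obtain ⟨a, ha, rfl⟩ := hb
    exact (hIe a ha).2.2.2.1
  · intro b hb
    simp only [Set.Finite.mem_toFinset] at hb
    have hbA := hh1 b hb
    obtain ⟨c1, c2, c3, c4, c5, c6, c7, _⟩ := hIe (h b) hbA
    rw [hh2 b hb] at c1 c2 c3 c4 c6 c7
    refine ⟨?_, ?_, ?_, ?_⟩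
    · rw [List.isChain_cons]
      refine ⟨?_, c1⟩
      intro z hz
      rw [c2] at hz
      simp at hz
      obtain ⟨j, hj⟩ := hbA
      rw [← hz, ← hj]
      exact (hg' (Sum.inr j)).2
    · exact (List.nodup_append.1 c3).1
    · intro u hu
      refine ⟨c5 u hu, ?_⟩
      rintro rfl
      exact c7 u (by simp [hu]) (c5 u hu) hfy
    · intro b' hb' hne u hu hu'
      simp only [Set.Finite.mem_toFinset] at hb'
      refine c6 (h b') (hh1 b' hb') ?_ u (by simp [hu]) (by simp [hu'])
      intro he
      apply hne
      rw [← hh2 b hb, ← hh2 b' hb', he]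

/-- Assembling a subdivision of a wheel-like digraph. -/
lemma assemble (G : W → W → Prop) (c : ℕ → W) (N : ℕ) (hstep : ∀ i < N, G (c i) (c (i + 1)))
    (hcN : c N = c 0) (hcinj : ∀ i < N, ∀ j < N, c i = c j → i = j) (y : W)
    (hy : ∀ i < N, c i ≠ y) (hxy : G (c 0) y) (s : ℕ) (hs : 2 ≤ s) (j : Fin s → ℕ)
    (hj : StrictMono j) (hjN : ∀ k, j k < N) (hj0 : ∀ k : Fin s, (k : ℕ) = 0 → j k = 0)
    (B : Finset W) (F : W → List W)
    (hF : ∀ b ∈ B, List.IsChain G (y :: (F b ++ [b])) ∧ (F b).Nodup ∧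
        (∀ u ∈ F b, (∀ i < N, c i ≠ u) ∧ u ≠ y) ∧ ∀ b' ∈ B, b ≠ b' → ∀ u ∈ F b, u ∉ F b')
    (H : Option (Fin s) → Option (Fin s) → Prop)
    (hH : ∀ a b, H a b → (∃ k, a = none ∧ b = some k ∧ c (j k) ∈ B) ∨
      (∃ i k, a = some i ∧ b = some k ∧ dirCycle s i k) ∨
      (∃ k : Fin s, a = some k ∧ (k : ℕ) = 0 ∧ b = none)) :
    DiSubdivisionIn G H := by
  classical
  let e : Fin s → ℕ := fun i => if h : (i : ℕ) + 1 < s then j ⟨i + 1, h⟩ else N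
  have hje : ∀ i, j i < e i := by
    intro i
    simp only [e]
    split_ifs with h
    · exact hj (by rw [Fin.lt_def]; simp)
    · exact hjN i
  have heN : ∀ i, e i ≤ N := by
    intro i
    simp only [e]
    split_ifs with h
    · exact (hjN _).le
    · exact le_rfl
  have hlt : ∀ i k : Fin s, i < k → e i ≤ j k := by
    intro i k hik
    have h : (i : ℕ) + 1 < s := by have := k.2; rw [Fin.lt_def] at hik; omega
    simp only [e, dif_pos h]
    exact hj.monotone (by rw [Fin.le_def]; rw [Fin.lt_def] at hik; simp; omega)
  have hbetween : ∀ i k : Fin s, ¬ (j i < j k ∧ j k < e i) := by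
    rintro i k ⟨h1, h2⟩
    have := hlt i k (hj.lt_iff_lt.1 h1)
    omega
  have hce : ∀ i k : Fin s, dirCycle s i k → c (e i) = c (j k) ∧ i ≠ k := by
    intro i k hik
    have hik : (k : ℕ) = ((i : ℕ) + 1) % s := hik
    by_cases h : (i : ℕ) + 1 < s
    · rw [Nat.mod_eq_of_lt h] at hik
      constructor
      · simp only [e, dif_pos h]
        congr 2
        exact Fin.ext hik.symm
      · rintro rfl; omega
    · have h' : (i : ℕ) + 1 = s := by have := i.2; omega
      rw [h', Nat.mod_self] at hik
      constructor
      · simp only [e, dif_neg h]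
        rw [hcN, hj0 k hik]
      · rintro rfl; omega
  let seg : Fin s → List W := fun i => (List.range' (j i + 1) (e i - j i - 1)).map c
  have hseg : ∀ i u, u ∈ seg i → ∃ m, j i < m ∧ m < e i ∧ c m = u := by
    intro i u hu
    simp only [seg, List.mem_map, List.mem_range'_1] at hu
    obtain ⟨m, hm, rfl⟩ := hu
    exact ⟨m, by omega, by omega, rfl⟩
  let f : Option (Fin s) → W := fun a => a.elim y (fun k => c (j k))
  have hfK : ∀ k, f (some k) = c (j k) := fun k => rfl
  have hfn : f none = y := rfl
  let Q : Option (Fin s) → Option (Fin s) → List W := fun a b =>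
    match a, b with
    | none, some k => F (c (j k))
    | some i, some _ => seg i
    | _, none => []
  refine ⟨f, ?_, fun a b _ => Q a b, ?_, ?_, ?_, ?_⟩
  · rintro (_ | a) (_ | b) hab
    · rfl
    · exact absurd hab.symm (hy _ (hjN b))
    · exact absurd hab (hy _ (hjN a))
    · rw [hj.injective (hcinj _ (hjN a) _ (hjN b) hab)]
  · intro a b h
    change List.IsChain G (f a :: (Q a b ++ [f b]))
    rcases hH a b h with ⟨k, rfl, rfl, hk⟩ | ⟨i, k, rfl, rfl, hik⟩ | ⟨k, rfl, hk, rfl⟩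
    · exact (hF _ hk).1
    · have : f (some i) :: (Q (some i) (some k) ++ [f (some k)])
          = (List.range' (j i) (e i - j i + 1)).map c := by
        have h1 : e i - j i + 1 = (e i - j i - 1 + 1) + 1 := by have := hje i; omega
        rw [h1, List.range'_succ, List.range'_1_concat, List.map_cons, List.map_append]
        simp only [List.map_cons, List.map_nil, hfK, Q, seg]
        rw [show j i + 1 + (e i - j i - 1) = e i by have := hje i; omega, (hce i k hik).1]
      rw [this, List.isChain_iff_getElem]
      intro m hm
      simp only [List.length_map, List.length_range'] at hm
      simp only [List.getElem_map, List.getElem_range', one_mul]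
      rw [← add_assoc]
      exact hstep _ (by have := heN i; omega)
    · simp only [Q, hfK, hfn, List.nil_append, List.isChain_pair, hj0 k hk]
      exact hxy
  · intro a b h
    change (f a :: (Q a b ++ [f b])).Nodup
    rcases hH a b h with ⟨k, rfl, rfl, hk⟩ | ⟨i, k, rfl, rfl, hik⟩ | ⟨k, rfl, hk, rfl⟩
    · obtain ⟨h1, h2, h3, h4⟩ := hF _ hk
      simp only [hfn, hfK, Q, List.nodup_cons, List.nodup_append, List.mem_append,
        List.mem_singleton]
      refine ⟨?_, h2, by simp, ?_⟩
      · rintro (h | h)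
        · exact (h3 _ h).2 rfl
        · exact hy _ (hjN k) h.symm
      · rintro u hu b rfl rfl
        exact (h3 _ hu).1 _ (hjN k) rfl
    · simp only [hfK, Q, List.nodup_cons, List.nodup_append, List.mem_append,
        List.mem_singleton]
      refine ⟨?_, ?_, by simp, ?_⟩
      · rintro (h | h)
        · obtain ⟨m, hm1, hm2, hm⟩ := hseg _ _ h
          have := hcinj _ (by have := heN i; omega) _ (hjN i) hm
          omega
        · exact (hce i k hik).2 (hj.injective (hcinj _ (hjN _) _ (hjN _) h))
      · refine List.Nodup.map_on ?_ List.nodup_range'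
        intro a ha b hb hab
        simp only [List.mem_range'_1] at ha hb
        have := heN i
        exact hcinj _ (by omega) _ (by omega) hab
      · rintro u hu b rfl rfl
        obtain ⟨m, hm1, hm2, hm⟩ := hseg _ _ hu
        have := hcinj _ (by have := heN i; omega) _ (hjN k) hm
        exact hbetween i k ⟨by omega, by omega⟩
    · simp only [Q, hfK, hfn, List.nil_append]
      simpa using hy _ (hjN k)
  · intro a b h u hu
    change u ∈ Q a b at hu
    rcases hH a b h with ⟨k, rfl, rfl, hk⟩ | ⟨i, k, rfl, rfl, hik⟩ | ⟨k, rfl, hk, rfl⟩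
    · obtain ⟨h1, h2, h3, h4⟩ := hF _ hk
      rintro ⟨_ | m, rfl⟩
      · exact (h3 _ hu).2 rfl
      · exact (h3 _ hu).1 _ (hjN m) rfl
    · obtain ⟨m, hm1, hm2, hm⟩ := hseg _ _ hu
      have hmN : m < N := by have := heN i; omega
      rintro ⟨_ | k', rfl⟩
      · exact hy m hmN hm
      · have := hcinj _ hmN _ (hjN k') hm
        exact hbetween i k' ⟨by omega, by omega⟩
    · simp [Q] at hu
  · intro a b a' b' h h' hne u hu hu'
    change u ∈ Q a b at hu
    change u ∈ Q a' b' at hu'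
    rcases hH a b h with ⟨k, rfl, rfl, hk⟩ | ⟨i, k, rfl, rfl, hik⟩ | ⟨k, rfl, hk, rfl⟩
    · obtain ⟨h1, h2, h3, h4⟩ := hF _ hk
      rcases hH a' b' h' with ⟨k', rfl, rfl, hk'⟩ | ⟨i', k', rfl, rfl, hik'⟩ | ⟨k', rfl, hk', rfl⟩
      · refine h4 _ hk' ?_ u hu hu'
        intro he
        apply hne
        rw [hj.injective (hcinj _ (hjN _) _ (hjN _) he)]
      · obtain ⟨m, hm1, hm2, hm⟩ := hseg _ _ hu'
        exact (h3 _ hu).1 m (by have := heN i'; omega) hm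
      · simp [Q] at hu'
    · obtain ⟨m, hm1, hm2, hm⟩ := hseg _ _ hu
      have hmN : m < N := by have := heN i; omega
      rcases hH a' b' h' with ⟨k', rfl, rfl, hk'⟩ | ⟨i', k', rfl, rfl, hik'⟩ | ⟨k', rfl, hk', rfl⟩
      · exact ((hF _ hk').2.2.1 _ hu').1 m hmN hm
      · obtain ⟨m', hm1', hm2', hm'⟩ := hseg _ _ hu'
        have hmN' : m' < N := by have := heN i'; omega
        have hmm := hcinj _ hmN _ hmN' (hm.trans hm'.symm)
        rcases lt_trichotomy i i' with hii | hii | hii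
        · have := hlt _ _ hii; omega
        · subst hii
          apply hne
          have e1 : (k : ℕ) = ((i : ℕ) + 1) % s := hik
          have e2 : (k' : ℕ) = ((i : ℕ) + 1) % s := hik'
          rw [Fin.ext (e1.trans e2.symm)]
        · have := hlt _ _ hii; omega
      · simp [Q] at hu'
    · simp [Q] at hu

/-- A cycle together with a fan yields one of the two wheels. -/
lemma final_step (G : W → W → Prop) (M : List W) (x y : W)
    (hnd : (M ++ [x]).Nodup) (hch : List.IsChain G (x :: (M ++ [x])))
    (hy : y ∉ M ++ [x]) (hxy : G x y) (t : ℕ) (ht : 2 ≤ t)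
    (B : Finset W) (F : W → List W) (hBt : B.card = t) (hBK : ∀ b ∈ B, b ∈ M ++ [x])
    (hF : ∀ b ∈ B, List.IsChain G (y :: (F b ++ [b])) ∧ (F b).Nodup ∧
        (∀ u ∈ F b, u ∉ M ++ [x] ∧ u ≠ y) ∧ ∀ b' ∈ B, b ≠ b' → ∀ u ∈ F b, u ∉ F b') :
    DiSubdivisionIn G (dirW1 t) ∨ DiSubdivisionIn G (dirW2 (t + 1)) := by
  classical
  let c : ℕ → W := fun i => (x :: (M ++ [x])).getD i x
  set N := M.length + 1 with hN
  have hlen : (x :: (M ++ [x])).length = N + 1 := by simp [hN]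
  have hcget : ∀ i (h : i < N + 1), c i = (x :: (M ++ [x]))[i]'(by rw [hlen]; exact h) := by
    intro i h
    simp only [c]
    rw [List.getD_eq_getElem]
  have hc0 : c 0 = x := rfl
  have hcN : c N = x := by rw [hcget N (by omega)]; simp [hN]
  have hstep : ∀ i < N, G (c i) (c (i + 1)) := by
    intro i hi
    rw [hcget i (by omega), hcget (i+1) (by omega)]
    exact List.isChain_iff_getElem.1 hch i (by rw [hlen]; omega)
  have hnd' : (x :: M).Nodup := by
    rw [List.nodup_append] at hnd
    rw [List.nodup_cons]
    exact ⟨fun h => hnd.2.2 x h x (by simp) rfl, hnd.1⟩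
  have hcM : ∀ i (h : i < N), c i = (x :: M)[i]'(by simp; omega) := by
    intro i h
    rw [hcget i (by omega)]
    simp only [← List.cons_append]
    rw [List.getElem_append_left]
  have hcinj : ∀ i < N, ∀ j < N, c i = c j → i = j := by
    intro i hi j hj hij
    rw [hcM i hi, hcM j hj] at hij
    exact (List.Nodup.getElem_inj_iff hnd').1 hij
  have hcmem : ∀ i < N, c i ∈ M ++ [x] := by
    intro i hi
    have : c i ∈ x :: M := by rw [hcM i hi]; exact List.getElem_mem _
    simp only [List.mem_cons, List.mem_append] at this ⊢
    tauto
  have hcsurj : ∀ u ∈ M ++ [x], ∃ i < N, c i = u := by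
    intro u hu
    have : u ∈ x :: M := by
      simp only [List.mem_cons, List.mem_append] at hu ⊢
      simp at hu; tauto
    obtain ⟨i, hi, h⟩ := List.getElem_of_mem this
    have hi' : i < N := by simp at hi; omega
    exact ⟨i, hi', by rw [hcM i hi']; exact h⟩
  let J0 : Finset ℕ := (Finset.range N).filter (fun i => c i ∈ B)
  have hJ0 : J0.card = t := by
    rw [← hBt]
    apply Finset.card_bij (fun i _ => c i)
    · intro i hi; exact (Finset.mem_filter.1 hi).2
    · intro i hi i' hi' h
      exact hcinj i (Finset.mem_range.1 (Finset.mem_filter.1 hi).1) i'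
        (Finset.mem_range.1 (Finset.mem_filter.1 hi').1) h
    · intro b hb
      obtain ⟨i, hi, h⟩ := hcsurj b (hBK b hb)
      exact ⟨i, Finset.mem_filter.2 ⟨Finset.mem_range.2 hi, by rw [h]; exact hb⟩, h⟩
  have main : ∀ (s : ℕ) (J : Finset ℕ) (hJ : J.card = s), 2 ≤ s → 0 ∈ J → (∀ i ∈ J, i < N) →
      ∀ H : Option (Fin s) → Option (Fin s) → Prop,
      (∀ a b, H a b → (∃ k, a = none ∧ b = some k ∧ c (J.orderEmbOfFin hJ k) ∈ B) ∨
      (∃ i k, a = some i ∧ b = some k ∧ dirCycle s i k) ∨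
      (∃ k : Fin s, a = some k ∧ (k : ℕ) = 0 ∧ b = none)) → DiSubdivisionIn G H := by
    intro s J hJ hs h0 hJN H hH
    refine assemble G c N hstep (hcN.trans hc0.symm) hcinj y ?_ hxy s hs (J.orderEmbOfFin hJ)
      (J.orderEmbOfFin hJ).strictMono (fun k => hJN _ (Finset.orderEmbOfFin_mem J hJ k)) ?_ B F
      ?_ H hH
    · intro i hi h; exact hy (h ▸ hcmem i hi)
    · intro k hk
      have : k = ⟨0, by omega⟩ := Fin.ext hk
      rw [this, Finset.orderEmbOfFin_zero hJ (by omega)]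
      exact Nat.le_zero.1 (Finset.min'_le _ _ h0)
    · intro b hb
      obtain ⟨h1, h2, h3, h4⟩ := hF b hb
      refine ⟨h1, h2, fun u hu => ⟨fun i hi h => (h3 u hu).1 (h ▸ hcmem i hi), (h3 u hu).2⟩, h4⟩
  by_cases hxB : x ∈ B
  · left
    refine main t J0 hJ0 ht (Finset.mem_filter.2 ⟨by simp [hN], hxB⟩)
      (fun i hi => Finset.mem_range.1 (Finset.mem_filter.1 hi).1) _ ?_
    rintro a b ((⟨rfl, k, rfl⟩ | ⟨i, k, rfl, rfl, h⟩) | ⟨⟨u, rfl, hu⟩, rfl⟩)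
    · exact Or.inl ⟨k, rfl, rfl, (Finset.mem_filter.1 (Finset.orderEmbOfFin_mem J0 hJ0 k)).2⟩
    · exact Or.inr (Or.inl ⟨i, k, rfl, rfl, h⟩)
    · exact Or.inr (Or.inr ⟨u, rfl, hu, rfl⟩)
  · right
    have h0 : 0 ∉ J0 := fun h => hxB (Finset.mem_filter.1 h).2
    have hJ : (insert 0 J0).card = t + 1 := by rw [Finset.card_insert_of_notMem h0, hJ0]
    refine main (t + 1) (insert 0 J0) hJ (by omega) (by simp) ?_ _ ?_
    · intro i hi
      rcases Finset.mem_insert.1 hi with rfl | hi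
      · omega
      · exact Finset.mem_range.1 (Finset.mem_filter.1 hi).1
    · rintro a b (⟨i, k, rfl, rfl, h⟩ | ⟨rfl, k, rfl, hk⟩ | ⟨⟨u, rfl, hu⟩, rfl⟩)
      · exact Or.inr (Or.inl ⟨i, k, rfl, rfl, h⟩)
      · refine Or.inl ⟨k, rfl, rfl, ?_⟩
        rcases Finset.mem_insert.1 (Finset.orderEmbOfFin_mem (insert 0 J0) hJ k) with h | h
        · exfalso
          have hz : (insert 0 J0).orderEmbOfFin hJ ⟨0, by omega⟩ = 0 := by
            rw [Finset.orderEmbOfFin_zero hJ (by omega)]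
            exact Nat.le_zero.1 (Finset.min'_le _ _ (by simp))
          have := ((insert 0 J0).orderEmbOfFin hJ).injective (h.trans hz.symm)
          apply hk
          rw [this]
        · exact (Finset.mem_filter.1 h).2
      · exact Or.inr (Or.inr ⟨u, rfl, hu, rfl⟩)

/-- A shortest path between two distinct vertices. -/
lemma short_path (r : W → W → Prop) (a b : W) (hab : a ≠ b) (h : Relation.ReflTransGen r a b) :
    ∃ Q : List W, List.IsChain r (a :: (Q ++ [b])) ∧ (a :: (Q ++ [b])).Nodup ∧
      ∀ q ∈ (Q ++ [b]).tail, ¬ r a q := by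
  classical
  let A : Set (List W) := {L | List.IsChain r L ∧ L.head? = some a ∧ L.getLast? = some b}
  have hne : ∃ n, ∃ L ∈ A, L.length = n := by
    obtain ⟨l, hl, hl'⟩ := List.exists_isChain_cons_of_relationReflTransGen h
    refine ⟨_, a :: l, ⟨hl, rfl, ?_⟩, rfl⟩
    rw [List.getLast?_eq_some_getLast (List.cons_ne_nil _ _), hl']
  obtain ⟨L, ⟨hL1, hL2, hL3⟩, hLn⟩ := Nat.find_spec hne
  have hmin : ∀ L' ∈ A, L.length ≤ L'.length := by
    intro L' hL'
    rw [hLn]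
    exact Nat.find_min' hne ⟨L', hL', rfl⟩
  have hnd : L.Nodup := by
    by_contra hnd
    obtain ⟨z, hz⟩ := List.exists_duplicate_iff_not_nodup.2 hnd
    rw [List.duplicate_iff_sublist, List.cons_sublist_iff] at hz
    obtain ⟨r1, r2, rfl, h1, h2⟩ := hz
    obtain ⟨A1, B1, rfl⟩ := List.append_of_mem h1
    obtain ⟨C1, D1, rfl⟩ := List.append_of_mem (List.singleton_sublist.1 h2)
    have := hmin (A1 ++ z :: D1) ⟨?_, ?_, ?_⟩
    · simp at this; omega
    · have e1 : (A1 ++ z :: B1) ++ (C1 ++ z :: D1) = A1 ++ z :: (B1 ++ (C1 ++ z :: D1)) := by simp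
      have e2 : (A1 ++ z :: B1) ++ (C1 ++ z :: D1) = (A1 ++ z :: B1 ++ C1) ++ z :: D1 := by simp
      rw [List.isChain_split]
      constructor
      · rw [e1] at hL1; exact (List.isChain_split.1 hL1).1
      · rw [e2] at hL1; exact (List.isChain_split.1 hL1).2
    · cases A1 <;> simpa using hL2
    · have e2 : (A1 ++ z :: B1) ++ (C1 ++ z :: D1) = (A1 ++ z :: B1 ++ C1) ++ z :: D1 := by simp
      rw [e2, List.getLast?_append] at hL3
      rw [List.getLast?_append]
      simpa using hL3
  obtain ⟨L2, rfl⟩ : ∃ L2, L = a :: L2 := by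
    cases L with
    | nil => simp at hL2
    | cons z L2 => simp at hL2; exact ⟨L2, by rw [hL2]⟩
  have hL2' : L2 ≠ [] := by
    rintro rfl
    simp at hL3; exact hab hL3
  obtain ⟨Q, z, rfl⟩ : ∃ Q z, L2 = Q ++ [z] :=
    ⟨L2.dropLast, L2.getLast hL2', (List.dropLast_append_getLast hL2').symm⟩
  have hz : z = b := by
    rw [← List.cons_append, List.getLast?_append] at hL3
    simpa using hL3
  subst hz
  refine ⟨Q, hL1, hnd, ?_⟩
  intro q hq hr
  obtain ⟨D, E, hDE⟩ := List.append_of_mem hq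
  obtain ⟨q1, hq1⟩ : ∃ q1, Q ++ [z] = q1 :: (D ++ q :: E) := by
    cases hQ : Q ++ [z] with
    | nil => simp at hQ
    | cons q1 Q2 => rw [hQ] at hDE; simp at hDE; exact ⟨q1, by rw [hDE]⟩
  rw [hq1] at hL1 hL3 hmin
  have := hmin (a :: q :: E) ⟨?_, rfl, ?_⟩
  · simp at this; omega
  · rw [List.isChain_cons_cons]
    refine ⟨hr, ?_⟩
    have e : a :: q1 :: (D ++ q :: E) = (a :: q1 :: D) ++ q :: E := by simp
    rw [e] at hL1
    exact (List.isChain_split.1 hL1).2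
  · have e : a :: q1 :: (D ++ q :: E) = (a :: q1 :: D) ++ q :: E := by simp
    rw [e, List.getLast?_append] at hL3
    simpa using hL3

lemma first_mem (E : Set W) : ∀ l : List W, (∃ u ∈ l, u ∈ E) →
    ∃ M1 c M2, l = M1 ++ c :: M2 ∧ c ∈ E ∧ ∀ u ∈ M1, u ∉ E := by
  intro l
  induction l with
  | nil => simp
  | cons a l ih =>
    intro h
    by_cases ha : a ∈ E
    · exact ⟨[], a, l, rfl, ha, by simp⟩
    · obtain ⟨u, hu, huE⟩ := h
      rcases List.mem_cons.1 hu with rfl | hu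
      · exact absurd huE ha
      · obtain ⟨M1, c, M2, rfl, hc, h⟩ := ih ⟨u, hu, huE⟩
        refine ⟨a :: M1, c, M2, rfl, hc, ?_⟩
        intro v hv
        rcases List.mem_cons.1 hv with rfl | hv
        · exact ha
        · exact h v hv

lemma main_ind_s19 [Fintype W] (t : ℕ) (ht : 2 ≤ t)
    (G : W → W → Prop) (hG : ∀ u, ¬ G u u)
    (hsc : ∀ u v : W, Relation.ReflTransGen G u v) :
    ∀ (n : ℕ) (S : Set W) (M : List W) (x y : W), Sᶜ.ncard = n →
    (∀ w ∉ S, t ≤ outDeg G w) → (∀ u ∈ M ++ [x], u ∈ S) → (M ++ [x]).Nodup →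
    List.IsChain G (x :: (M ++ [x])) → y ∉ S → G x y →
    (∀ T, {u | u ∈ M ++ [x]} ⊆ T → T ⊆ S → (inBoundary G S).ncard ≤ (inBoundary G T).ncard) →
    DiSubdivisionIn G (dirW1 t) ∨ DiSubdivisionIn G (dirW2 (t + 1)) := by
  classical
  intro n
  induction n using Nat.strong_induction_on with
  | _ n ih =>
  intro S M x y hn hdeg hMS hnd hch hyS hxy hcut
  set K : Set W := {u | u ∈ M ++ [x]} with hK
  have hKS : K ⊆ S := hMS
  by_cases hfan : ∀ T, K ⊆ T → y ∉ T → t ≤ (inBoundary G T).ncard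
  · obtain ⟨B, F, h1, h2, h3⟩ := fan_lemma G K y (fun h => hyS (hKS h)) t hfan
    exact final_step G M x y hnd hch (fun h => hyS (hMS y h)) hxy t ht B F h1 h2 h3
  push Not at hfan
  obtain ⟨T0, hKT0, hyT0, hT0⟩ := hfan
  obtain ⟨Ss, ⟨hSS, hySs⟩, hmin⟩ := Set.exists_min_image {S' : Set W | S ⊆ S' ∧ y ∉ S'}
    (fun S' => (inBoundary G S').ncard) (Set.toFinite _) ⟨S, le_rfl, hyS⟩
  have hun : ∀ T, K ⊆ T → (inBoundary G (S ∪ T)).ncard ≤ (inBoundary G T).ncard := by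
    intro T hT
    have h1 := submod G S T
    have h2 := hcut (S ∩ T) (fun u hu => ⟨hKS hu, hT hu⟩) Set.inter_subset_left
    omega
  have hlt : (inBoundary G Ss).ncard < t := by
    have h1 := hun T0 hKT0
    have h2 := hmin (S ∪ T0) ⟨Set.subset_union_left, fun h => h.elim hyS hyT0⟩
    omega
  have hcut' : ∀ T, K ⊆ T → T ⊆ Ss → (inBoundary G Ss).ncard ≤ (inBoundary G T).ncard := by
    intro T hKT hT
    exact (hmin (S ∪ T) ⟨Set.subset_union_left,
      fun h => h.elim hyS (fun h => hySs (hT h))⟩).trans (hun T hKT)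
  have hKSs : K ⊆ Ss := hKS.trans hSS
  obtain ⟨f, hf1, hf2, hf3⟩ := cut_linkage G Ss K hKSs hcut'
  obtain ⟨I, e, hIe⟩ := orbit_paths G (inBoundary G Ss) K f hf1 hf2 hf3
  set D := inBoundary G Ss with hD
  have hinS : ∀ a ∈ D, ∀ u ∈ I a ++ [e a], u ∈ Ss := by
    intro a ha
    refine (hIe a ha).2.2.2.2.2.2.2 Ss hKSs ?_
    intro u hu hfu
    have huK : u ∉ K := fun h => hu (hKSs h)
    rcases hf3 u huK with h | h
    · rw [h] at hfu; exact hu hfu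
    · exact hf2 u huK ⟨hfu, u, hu, h⟩
  -- boundary nonempty
  have hDne : ∃ v, v ∈ D := by
    obtain ⟨l, hl, hl'⟩ := List.exists_isChain_cons_of_relationReflTransGen (hsc y x)
    obtain ⟨u, _, hu⟩ := list_meets G Ss l y hl (by
      intro lst hlst
      rw [List.getLast?_eq_some_getLast (List.cons_ne_nil _ _), hl'] at hlst
      simp at hlst
      rw [← hlst]
      exact hKSs (by simp [hK])) (fun h => absurd h hySs)
    exact ⟨u, hu⟩
  let r : W → W → Prop := fun a b => G a b ∧ a ∉ Ss
  have hreach : ∀ v ∈ D, Relation.ReflTransGen r y v := by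
    intro v hv
    by_contra hcon
    let S2 : Set W := {u | u ∉ Ss ∧ Relation.ReflTransGen r y u}ᶜ
    have h1 := hmin S2 ⟨fun u hu h => h.1 (hSS hu), fun h => h ⟨hySs, Relation.ReflTransGen.refl⟩⟩
    have h2 : inBoundary G S2 ⊆ D \ {v} := by
      rintro u ⟨hu, w, hw, hwu⟩
      simp only [S2, Set.mem_compl_iff, not_not] at hw
      have hur : Relation.ReflTransGen r y u := hw.2.tail ⟨hwu, hw.1⟩
      have huS : u ∈ Ss := by
        by_contra h; exact hu ⟨h, hur⟩
      exact ⟨⟨huS, w, hw.1, hwu⟩, fun h => hcon (h ▸ hur)⟩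
    have h3 := Set.ncard_le_ncard h2 (Set.toFinite _)
    have h4 := Set.ncard_diff_singleton_lt_of_mem hv (Set.toFinite _)
    omega
  -- first landing
  obtain ⟨M1, c, M2, hM, ⟨v, hvD, rfl⟩, hM1⟩ := first_mem (e '' D) (M ++ [x]) (by
    obtain ⟨v, hv⟩ := hDne
    exact ⟨e v, (hIe v hv).2.2.2.1, v, hv, rfl⟩)
  have hland : ∀ w ∈ D, e w ∈ e v :: M2 := by
    intro w hw
    have h1 : e w ∈ M ++ [x] := (hIe w hw).2.2.2.1
    rw [hM, List.mem_append] at h1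
    exact h1.resolve_left (fun h => hM1 _ h ⟨w, hw, rfl⟩)
  have hsubK : ∀ u ∈ e v :: M2, u ∈ K := by
    intro u hu
    change u ∈ M ++ [x]
    rw [hM]; exact List.mem_append_right _ hu
  obtain ⟨Q, hQ1, hQ2, hQ3⟩ := short_path r y v (fun h => hySs (h ▸ hvD.1)) (hreach v hvD)
  have hQS : ∀ q ∈ Q, q ∉ Ss := by
    intro q hq
    obtain ⟨A, E, rfl⟩ := List.append_of_mem hq
    have e1 : y :: (A ++ q :: E ++ [v]) = (y :: A) ++ q :: (E ++ [v]) := by simp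
    rw [e1] at hQ1
    have h := (List.isChain_split.1 hQ1).2
    cases E with
    | nil => exact (List.isChain_cons_cons.1 h).1.2
    | cons z E => exact (List.isChain_cons_cons.1 h).1.2
  have hQG : List.IsChain G (y :: (Q ++ [v])) := hQ1.imp (fun _ _ h => h.1)
  have hyQ : y ∉ Q := by
    intro h
    rw [List.nodup_cons] at hQ2
    exact hQ2.1 (by simp [h])
  have hQnd : Q.Nodup := by
    rw [List.nodup_cons, List.nodup_append] at hQ2
    exact hQ2.2.1
  obtain ⟨c1, c2, c3, c4, c5, c6, _, _⟩ := hIe v hvD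
  have hIS : ∀ u ∈ I v, u ∈ Ss := fun u hu => hinS v hvD u (by simp [hu])
  have hlast : (e v :: M2).getLast? = some x := by
    have : (M1 ++ e v :: M2).getLast? = some x := by rw [← hM]; simp
    rw [List.getLast?_append] at this
    simpa using this
  have hch2 : List.IsChain G (e v :: M2) := by
    rw [List.isChain_cons, hM] at hch
    exact (List.isChain_split.1 hch.2).2
  have hnd2 : (e v :: M2).Nodup := by
    rw [hM, List.nodup_append] at hnd
    exact hnd.2.1
  set M' := Q ++ (I v ++ (e v :: M2)) with hM'
  have hch' : List.IsChain G (y :: (M' ++ [y])) := by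
    have h1 : List.IsChain G (e v :: (M2 ++ [y])) := by
      rw [← List.cons_append, List.isChain_append]
      refine ⟨hch2, by simp, ?_⟩
      intro a ha b hb
      rw [hlast] at ha
      simp at ha hb
      rw [← ha, ← hb]; exact hxy
    have h2 : List.IsChain G (I v ++ e v :: (M2 ++ [y])) := List.isChain_split.2 ⟨c1, h1⟩
    obtain ⟨R, hR⟩ : ∃ R, I v ++ e v :: (M2 ++ [y]) = v :: R := by
      cases hI : I v with
      | nil => rw [hI] at c2; simp at c2; exact ⟨M2 ++ [y], by simp [c2]⟩
      | cons z l => rw [hI] at c2; simp at c2; exact ⟨l ++ e v :: (M2 ++ [y]), by simp [c2]⟩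
    have e1 : y :: (M' ++ [y]) = (y :: Q) ++ (I v ++ e v :: (M2 ++ [y])) := by simp [hM']
    rw [e1, hR, List.isChain_split]
    exact ⟨by simpa using hQG, hR ▸ h2⟩
  have hnd' : (M' ++ [y]).Nodup := by
    rw [hM', List.nodup_append, List.nodup_append, List.nodup_append]
    refine ⟨⟨hQnd, ⟨(List.nodup_append.1 c3).1, hnd2, ?_⟩, ?_⟩, by simp, ?_⟩
    · rintro a ha b hb rfl
      exact c5 a ha (hsubK a hb)
    · rintro a ha b hb rfl
      apply hQS a ha
      rcases List.mem_append.1 hb with h | h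
      · exact hIS a h
      · exact hKSs (hsubK a h)
    · rintro a ha b hb rfl
      simp only [List.mem_singleton] at hb
      subst hb
      rcases List.mem_append.1 ha with h | h
      · exact hyQ h
      · rcases List.mem_append.1 h with h | h
        · exact hySs (hIS _ h)
        · exact hySs (hKSs (hsubK _ h))
  set S' : Set W := Ss ∪ {u | u = y ∨ u ∈ Q} with hS'
  -- new exit arc
  obtain ⟨y', hy'S, hyy'⟩ : ∃ y', y' ∉ S' ∧ G y y' := by
    by_contra hcon
    push Not at hcon
    have hsub : ∀ z, G y z → z ∈ S' := fun z hz => by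
      by_contra h; exact hcon z h hz
    have hd := hdeg y hyS
    have hD1 : ∀ z, G y z → z ∈ Ss → z ∈ D := fun z hz hzS => ⟨hzS, y, hySs, hz⟩
    have : outDeg G y ≤ D.ncard := by
      cases hQc : Q with
      | nil =>
        apply Set.ncard_le_ncard _ (Set.toFinite _)
        intro z hz
        rcases hsub z hz with h | h | h
        · exact hD1 z hz h
        · exact absurd (h ▸ hz) (hG y)
        · rw [hQc] at h; simp at h
      | cons q1 Q2 =>
        have h1 : {z | G y z} ⊆ insert q1 (D \ {v}) := by
          intro z hz
          have hz : G y z := hz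
          rcases hsub z hz with h | h | h
          · right
            refine ⟨hD1 z hz h, ?_⟩
            intro hzv
            have hzv : z = v := hzv
            exact hQ3 v (by simp [hQc]) ⟨hzv ▸ hz, hySs⟩
          · exact absurd (h ▸ hz) (hG y)
          · rw [hQc] at h
            rcases List.mem_cons.1 h with h | h
            · exact Or.inl h
            · exact absurd ⟨hz, hySs⟩ (hQ3 z (by simp [hQc, h]))
        have h2 := (Set.ncard_le_ncard h1 (Set.toFinite _)).trans (Set.ncard_insert_le _ _)
        have h4 := Set.ncard_diff_singleton_lt_of_mem hvD (Set.toFinite _)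
        unfold outDeg
        omega
    omega
  have hSsS' : Ss ⊆ S' := Set.subset_union_left
  have hM'S : ∀ u ∈ M' ++ [y], u ∈ S' := by
    intro u hu
    rw [hM'] at hu
    simp only [List.mem_append, List.mem_singleton] at hu
    rcases hu with (h | h | h) | h
    · exact Or.inr (Or.inr h)
    · exact Or.inl (hIS u h)
    · exact Or.inl (hKSs (hsubK u h))
    · exact Or.inr (Or.inl h)
  have hlt' : S'ᶜ.ncard < n := by
    rw [← hn]
    apply Set.ncard_lt_ncard _ (Set.toFinite _)
    refine ⟨fun u hu hS => hu (hSsS' (hSS hS)), fun h => ?_⟩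
    exact h hyS (Or.inr (Or.inl rfl))
  refine ih _ hlt' S' M' y y' rfl (fun w hw => hdeg w (fun h => hw (hSsS' (hSS h)))) hM'S hnd'
    hch' hy'S hyy' ?_
  have hbd : ∀ w ∈ inBoundary G S', w ∈ Ss → w ∈ D := by
    rintro w ⟨_, u, hu, huw⟩ hwS
    exact ⟨hwS, u, fun h => hu (hSsS' h), huw⟩
  have hbd' : ∀ w ∈ inBoundary G S', w ∉ M' ++ [y] → w ∈ D := by
    intro w hw hwM
    apply hbd w hw
    rcases hw.1 with h | h | h
    · exact h
    · exact absurd (by simp [h]) hwM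
    · exact absurd (by simp [hM', h]) hwM
  have hcons : ∀ w ∈ D, w :: (I w ++ [e w]).tail = I w ++ [e w] := by
    intro w hw
    have := (hIe w hw).2.1
    cases hl : I w ++ [e w] with
    | nil => simp at hl
    | cons a l => rw [hl] at this; simp at this; rw [this]; rfl
  have hwself : ∀ w ∈ D, w ∈ I w ++ [e w] := by
    intro w hw; rw [← hcons w hw]; simp
  refine paths_cut G S' _ (fun w => if w ∈ M' ++ [y] then [] else (I w ++ [e w]).tail) ?_ ?_ ?_
  · intro w hw
    by_cases h : w ∈ M' ++ [y]
    · simp only [if_pos h]; simp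
    · simp only [if_neg h]
      rw [hcons w (hbd' w hw h)]
      exact (hIe w (hbd' w hw h)).1
  · intro w hw lst
    by_cases h : w ∈ M' ++ [y]
    · simp only [if_pos h]
      intro hl
      simp at hl
      rw [← hl]; exact h
    · simp only [if_neg h]
      rw [hcons w (hbd' w hw h)]
      intro hl
      simp at hl
      have := hland w (hbd' w hw h)
      rw [← hl]
      change e w ∈ M' ++ [y]
      rw [hM']
      exact List.mem_append_left _ (List.mem_append_right _ (List.mem_append_right _ this))
  · intro w hw w' hw' hne u hu hu'
    by_cases h : w ∈ M' ++ [y]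
    · simp only [if_pos h, List.mem_singleton] at hu
      by_cases h' : w' ∈ M' ++ [y]
      · simp only [if_pos h', List.mem_singleton] at hu'
        exact hne (hu.symm.trans hu')
      · simp only [if_neg h'] at hu'
        have hw'D := hbd' w' hw' h'
        rw [hcons w' hw'D] at hu'
        subst hu
        have huD := hbd u hw (hinS w' hw'D u hu')
        exact (hIe u huD).2.2.2.2.2.1 w' hw'D hne u (hwself u huD) hu'
    · simp only [if_neg h] at hu
      have hwD := hbd' w hw h
      rw [hcons w hwD] at hu
      by_cases h' : w' ∈ M' ++ [y]
      · simp only [if_pos h', List.mem_singleton] at hu'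
        subst hu'
        have huD := hbd u hw' (hinS w hwD u hu)
        exact (hIe w hwD).2.2.2.2.2.1 u huD hne u hu (hwself u huD)
      · simp only [if_neg h'] at hu'
        have hw'D := hbd' w' hw' h'
        rw [hcons w' hw'D] at hu'
        exact (hIe w hwD).2.2.2.2.2.1 w' hw'D hne u hu hu'

end Helpers

/-- Technical lemma for directed wheels. Let `t ≥ 2`, let `G` be a strongly connected digraph
and `S ⊆ V(G)` such that: every vertex outside `S` has out-degree at least `t`; there is a
directed cycle `C` in `G[S]` and a family of `|∂⁻(S)|` pairwise disjoint directed paths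
(`v :: P v` for `v ∈ ∂⁻(S)`) from `∂⁻(S)` to `V(C)` internally disjoint from `V(C)`; and
there is an arc `(x,y)` with `x ∈ V(C)` and `y ∉ S`. Then `G` contains a subdivision of
`W⃗_t¹` or a subdivision of `W⃗_{t+1}²`. -/
theorem wheel_directed_lemma
    {W : Type*} [Fintype W] (t : ℕ) (ht : 2 ≤ t)
    (G : W → W → Prop) (hG : Irreflexive G)
    (hsc : ∀ u v : W, Relation.ReflTransGen G u v)
    (S : Set W)
    (hdeg : ∀ w ∉ S, t ≤ outDeg G w)
    (C : List W) (hCS : ∀ c ∈ C, c ∈ S) (hCnd : C.Nodup) (hClen : 2 ≤ C.length)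
    (hCchain : C.Chain' G)
    (hCclosed : ∀ hd lst : W, C.head? = some hd → C.getLast? = some lst → G lst hd)
    (P : W → List W)
    (hPchain : ∀ v ∈ inBoundary G S, List.Chain G v (P v))
    (hPend : ∀ v ∈ inBoundary G S, ∀ lst : W, (v :: P v).getLast? = some lst → lst ∈ C)
    (hPnd : ∀ v ∈ inBoundary G S, (v :: P v).Nodup)
    (hPint : ∀ v ∈ inBoundary G S, ∀ x ∈ (v :: P v).dropLast, x ≠ v → x ∉ C)
    (hPdisj : ∀ v ∈ inBoundary G S, ∀ v' ∈ inBoundary G S, v ≠ v' →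
      ∀ x ∈ (v :: P v), x ∉ (v' :: P v'))
    (x y : W) (hxC : x ∈ C) (hyS : y ∉ S) (hxy : G x y) :
    DiSubdivisionIn G (dirW1 t) ∨ DiSubdivisionIn G (dirW2 (t + 1)) := by
  obtain ⟨C1, C2, hC⟩ := List.append_of_mem hxC
  have hmem : ∀ u, u ∈ (C2 ++ C1) ++ [x] ↔ u ∈ C := by
    intro u
    rw [hC]
    simp only [List.mem_append, List.mem_cons, List.not_mem_nil, or_false]
    tauto
  have hperm : ((C2 ++ C1) ++ [x]).Perm C := by
    rw [hC]
    have e1 : C2 ++ C1 ++ [x] = C2 ++ (C1 ++ [x]) := by simp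
    have e2 : C1 ++ x :: C2 = (C1 ++ [x]) ++ C2 := by simp
    rw [e1, e2]
    exact List.perm_append_comm
  have hch : List.IsChain G C := hCchain
  have hlen : 2 ≤ (C1 ++ x :: C2).length := hC ▸ hClen
  rw [hC] at hch
  obtain ⟨h1, h2⟩ := List.isChain_split.1 hch
  refine main_ind_s19 t ht G (fun u => hG u) hsc _ S (C2 ++ C1) x y rfl hdeg
    (fun u hu => hCS u ((hmem u).1 hu)) (hperm.nodup_iff.2 hCnd) ?_ hyS hxy ?_
  · have e1 : x :: (C2 ++ C1 ++ [x]) = (x :: C2) ++ (C1 ++ [x]) := by simp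
    rw [e1, List.isChain_append]
    refine ⟨h2, h1, ?_⟩
    intro a ha b hb
    apply hCclosed b a
    · rw [hC]
      cases C1 with
      | nil => simpa using hb
      | cons z l => simpa using hb
    · rw [hC, List.getLast?_append]
      simp only [Option.mem_def] at ha
      rw [ha]; rfl
  · intro T hKT hTS
    refine paths_cut G S {u | u ∈ C2 ++ C1 ++ [x]} P hPchain ?_ hPdisj T hKT hTS
    intro v hv lst hl
    exact (hmem lst).2 (hPend v hv lst hl)
end
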